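/- Up to the S₃-action on 4Δ₂, there are exactly 8 regular unimodular triangulations 𝒯 of 4Δ₂ with the property that no smooth tropical quartic curve dual to 𝒯 satisfies genericity condition (i); these are exactly the unimodular refinements of a single common partial subdivision of 4Δ₂. -/

import Mathlib

noncomputable section

open Finset

/-- The 15 lattice points of the dilated simplex `4Δ₂ = {(x₁,x₂) ∈ ℤ²_{≥0} : x₁+x₂ ≤ 4}`. -/
def latticePts : Finset (ℤ × ℤ) :=
  (Finset.Icc (0 : ℤ) 4 ×ˢ Finset.Icc (0 : ℤ) 4).filter fun p => p.1 + p.2 ≤ 4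

/-- The value at `w ∈ ℝ²` of the tropical monomial with exponent `p` and coefficient `lam p`:
`lam p + p₁·w₁ + p₂·w₂`. -/
def mval (lam : ℤ × ℤ → ℝ) (p : ℤ × ℤ) (w : ℝ × ℝ) : ℝ :=
  lam p + (p.1 : ℝ) * w.1 + (p.2 : ℝ) * w.2

/-- The tropical quartic curve with coefficient vector `lam`: the corner locus of
`max_{(i,j) ∈ 4Δ₂} (lam_{ij} + i·x + j·y)`. -/
def tropCurve (lam : ℤ × ℤ → ℝ) : Set (ℝ × ℝ) :=
  {w | ∃ p ∈ latticePts, ∃ q ∈ latticePts, p ≠ q ∧ mval lam p w = mval lam q w ∧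
        ∀ r ∈ latticePts, mval lam r w ≤ mval lam p w}

/-- `σ` is exactly the set of lattice points of `4Δ₂` where the maximum defining the tropical
polynomial is attained at the point `w`. -/
def IsArgmax (lam : ℤ × ℤ → ℝ) (w : ℝ × ℝ) (σ : Finset (ℤ × ℤ)) : Prop :=
  ∀ p : ℤ × ℤ, p ∈ σ ↔ p ∈ latticePts ∧ ∀ q ∈ latticePts, mval lam q w ≤ mval lam p w

/-- `T` is the set of maximal (2-dimensional) cells of the regular subdivision of `4Δ₂`
induced by the coefficient vector `lam`; equivalently, `lam` lies in the (relatively open)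
secondary cone `Σ(T)`. -/
def Induces (lam : ℤ × ℤ → ℝ) (T : Finset (Finset (ℤ × ℤ))) : Prop :=
  ∀ σ : Finset (ℤ × ℤ), σ ∈ T ↔ 3 ≤ σ.card ∧ ∃ w : ℝ × ℝ, IsArgmax lam w σ

/-- Embedding of lattice points into `ℝ²`. -/
def toR (p : ℤ × ℤ) : ℝ × ℝ := ((p.1 : ℝ), (p.2 : ℝ))

/-- Convex hull in `ℝ²` of a finite set of lattice points. -/
def rhull (σ : Finset (ℤ × ℤ)) : Set (ℝ × ℝ) := convexHull ℝ (toR '' ↑σ)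

/-- A triangle with vertices `a, b, c` of normalized area 1 (Euclidean area ½). -/
def IsUnimodularTriangle (σ : Finset (ℤ × ℤ)) : Prop :=
  ∃ a b c : ℤ × ℤ, σ = {a, b, c} ∧
    ((b.1 - a.1) * (c.2 - a.2) - (b.2 - a.2) * (c.1 - a.1)).natAbs = 1

/-- `T` is a unimodular triangulation of `4Δ₂`: its cells are unimodular triangles with
vertices among the lattice points, they cover `4Δ₂`, and they intersect face-to-face. -/
def IsUnimodularTriangulation (T : Finset (Finset (ℤ × ℤ))) : Prop :=
  (∀ σ ∈ T, σ ⊆ latticePts ∧ IsUnimodularTriangle σ) ∧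
  (⋃ σ ∈ T, rhull σ) = rhull latticePts ∧
  ∀ σ ∈ T, ∀ τ ∈ T, rhull σ ∩ rhull τ = rhull (σ ∩ τ)

/-- A regular (= induced by some coefficient vector) unimodular triangulation of `4Δ₂`. -/
def IsRegularUnimodularTriangulation (T : Finset (Finset (ℤ × ℤ))) : Prop :=
  IsUnimodularTriangulation T ∧ ∃ lam, Induces lam T

/-- A coefficient vector defines a smooth tropical quartic iff its induced regular subdivision
is a unimodular triangulation of `4Δ₂`. -/
def IsSmoothTropicalQuartic (lam : ℤ × ℤ → ℝ) : Prop :=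
  ∃ T, Induces lam T ∧ IsUnimodularTriangulation T

/-- A sign distribution on the lattice points of `4Δ₂`. -/
def IsSignDist (δ : ℤ × ℤ → ℤ) : Prop := ∀ p ∈ latticePts, δ p = 1 ∨ δ p = -1

/-- `p + e₁`. -/
def pE1 (p : ℤ × ℤ) : ℤ × ℤ := (p.1 + 1, p.2)
/-- `p + e₂`. -/
def pE2 (p : ℤ × ℤ) : ℤ × ℤ := (p.1, p.2 + 1)

/-- The "downward" unimodular triangle `{p, p+e₁, p+e₂}`; its dual vertex on the tropical
curve has adjacent edges in directions `-e₁`, `-e₂` and `e₁+e₂`. -/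
def downTri (p : ℤ × ℤ) : Finset (ℤ × ℤ) := {p, pE1 p, pE2 p}

/-- The vertex of the tropical curve dual to the triangle `downTri p`. -/
def dvtx (lam : ℤ × ℤ → ℝ) (p : ℤ × ℤ) : ℝ × ℝ :=
  (lam p - lam (pE1 p), lam p - lam (pE2 p))

/-- `w` lies on the edge of the tropical curve dual to the edge `{a, b}` of the dual
subdivision: the maximum is attained at both `a` and `b`. -/
def OnDualEdge (lam : ℤ × ℤ → ℝ) (a b : ℤ × ℤ) (w : ℝ × ℝ) : Prop :=
  mval lam a w = mval lam b w ∧ ∀ r ∈ latticePts, mval lam r w ≤ mval lam a w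

/-- Parameters `t ≥ 0` such that `dvtx - t·e₁` still lies on the edge (in direction `-e₁`)
emanating from the vertex dual to `downTri p`. -/
def edgeSet1 (lam : ℤ × ℤ → ℝ) (p : ℤ × ℤ) : Set ℝ :=
  {t | 0 ≤ t ∧ OnDualEdge lam p (pE2 p) ((dvtx lam p).1 - t, (dvtx lam p).2)}

/-- As `edgeSet1`, for the edge in direction `-e₂`. -/
def edgeSet2 (lam : ℤ × ℤ → ℝ) (p : ℤ × ℤ) : Set ℝ :=
  {t | 0 ≤ t ∧ OnDualEdge lam p (pE1 p) ((dvtx lam p).1, (dvtx lam p).2 - t)}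

/-- As `edgeSet1`, for the edge in direction `e₁+e₂`. -/
def edgeSet3 (lam : ℤ × ℤ → ℝ) (p : ℤ × ℤ) : Set ℝ :=
  {t | 0 ≤ t ∧ OnDualEdge lam (pE1 p) (pE2 p) ((dvtx lam p).1 + t, (dvtx lam p).2 + t)}

/-- Lattice length `μ₁` of the edge in direction `-e₁` at the vertex dual to `downTri p`. -/
def mu1 (lam : ℤ × ℤ → ℝ) (p : ℤ × ℤ) : ℝ := sSup (edgeSet1 lam p)
/-- Lattice length `μ₂` of the edge in direction `-e₂` at the vertex dual to `downTri p`. -/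
def mu2 (lam : ℤ × ℤ → ℝ) (p : ℤ × ℤ) : ℝ := sSup (edgeSet2 lam p)
/-- Lattice length `μ₃` of the edge in direction `e₁+e₂` at the vertex dual to `downTri p`. -/
def mu3 (lam : ℤ × ℤ → ℝ) (p : ℤ × ℤ) : ℝ := sSup (edgeSet3 lam p)

/-- The tropical curve of `lam` has a vertex dual to `downTri p` which is adjacent to three
*bounded* edges in directions `-e₁`, `-e₂` and `e₁+e₂` (the configuration of genericity
condition (i); for a smooth quartic such a vertex is the vertex of a tropical bitangent
line whose bitangent class has shape (C)). -/
def HasCVertexAt (lam : ℤ × ℤ → ℝ) (p : ℤ × ℤ) : Prop :=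
  (∃ w, IsArgmax lam w (downTri p)) ∧
  BddAbove (edgeSet1 lam p) ∧ BddAbove (edgeSet2 lam p) ∧ BddAbove (edgeSet3 lam p)

/-- Among the three reals, there is a unique smallest one. -/
def UniqueShortest (a b c : ℝ) : Prop :=
  (a < b ∧ a < c) ∨ (b < a ∧ b < c) ∨ (c < a ∧ c < b)

/-- Genericity condition (i) of Cueto–Markwig: whenever the curve contains a vertex adjacent
to three bounded edges with directions `-e₁`, `-e₂` and `e₁+e₂`, the shortest of these three
edges is unique. -/
def SatisfiesGenericityI (lam : ℤ × ℤ → ℝ) : Prop :=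
  ∀ p : ℤ × ℤ, HasCVertexAt lam p → UniqueShortest (mu1 lam p) (mu2 lam p) (mu3 lam p)

/-- The smooth tropical quartic `Γ_lam` has a bitangent class of shape (C): the central
triangle `{(1,1),(2,1),(1,2)}` is a cell of the dual subdivision and the three edges of the
curve at its dual vertex (which have directions `-e₁`, `-e₂`, `e₁+e₂`) are bounded; the
bitangent class of shape (C) consists exactly of this vertex. -/
def HasShapeC (lam : ℤ × ℤ → ℝ) : Prop := HasCVertexAt lam (1, 1)

/-- A generic (regular unimodular) triangulation: some smooth tropical quartic dual to it
satisfies genericity condition (i). -/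
def GenericTriangulation (T : Finset (Finset (ℤ × ℤ))) : Prop :=
  IsRegularUnimodularTriangulation T ∧ ∃ lam, Induces lam T ∧ SatisfiesGenericityI lam

/-- A non-generic (regular unimodular) triangulation: every smooth tropical quartic dual to
it fails genericity condition (i). -/
def NonGenericTriangulation (T : Finset (Finset (ℤ × ℤ))) : Prop :=
  IsRegularUnimodularTriangulation T ∧ ∀ lam, Induces lam T → ¬ SatisfiesGenericityI lam

/-- The sign conditions (C) of Cueto–Markwig (Table 11, Corollary 7.3) for the bitangent
class of shape (C) with motif indices `i, j, k`. -/
def SignConditionC (δ : ℤ × ℤ → ℤ) (i j k : ℕ) : Prop :=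
  0 < (-δ (1, 1)) ^ (i + j) * (δ (1, 2)) ^ i * (δ (2, 1)) ^ j *
        δ (0, (i : ℤ)) * δ ((j : ℤ), 0) ∧
  0 < (-δ (2, 1)) ^ (k + j) * (δ (1, 2)) ^ k * (δ (1, 1)) ^ j *
        δ ((k : ℤ), 4 - (k : ℤ)) * δ ((j : ℤ), 0)

/-- Barycentric coordinates `(p₁, p₂, 4 - p₁ - p₂)` of a lattice point of `4Δ₂`. -/
def bar3 (p : ℤ × ℤ) : Fin 3 → ℤ := ![p.1, p.2, 4 - p.1 - p.2]

/-- The action of `S₃` on the lattice points of `4Δ₂` by permuting the barycentric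
coordinates (generated by the reflections along the medians of the triangle). -/
def actPt (π : Equiv.Perm (Fin 3)) (p : ℤ × ℤ) : ℤ × ℤ := (bar3 p (π⁻¹ 0), bar3 p (π⁻¹ 1))

/-- The induced `S₃`-action on triangulations of `4Δ₂`. -/
def actTri (π : Equiv.Perm (Fin 3)) (T : Finset (Finset (ℤ × ℤ))) : Finset (Finset (ℤ × ℤ)) :=
  T.image fun σ => σ.image (actPt π)

/-- Two triangulations are equivalent under the `S₃`-action. -/
def S3Equiv (T T' : Finset (Finset (ℤ × ℤ))) : Prop := ∃ π : Equiv.Perm (Fin 3), actTri π T = T'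


/-- A partial subdivision of `4Δ₂`: a finite collection of nonempty sets of lattice points
of `4Δ₂` whose convex hulls intersect face-to-face (it need not cover all of `4Δ₂`). -/
def IsPartialSubdivision (S : Finset (Finset (ℤ × ℤ))) : Prop :=
  (∀ c ∈ S, c ⊆ latticePts ∧ (c : Set (ℤ × ℤ)).Nonempty) ∧
  ∀ c ∈ S, ∀ c' ∈ S, rhull c ∩ rhull c' = rhull (c ∩ c')

/-- A triangulation `T` refines a partial subdivision `S`: every cell of `S` is the union
of the cells of `T` contained in it. -/
def Refines (T S : Finset (Finset (ℤ × ℤ))) : Prop :=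
  ∀ c ∈ S, rhull c = ⋃ σ ∈ T, ⋃ (_ : rhull σ ⊆ rhull c), rhull σ

/-!
A vertex with bounded edges in the directions `-e₁`, `-e₂`, `e₁ + e₂` can only be dual to the
central triangle `(1,1), (2,1), (1,2)`. The length of its `k`-th edge is the `gap` at the apex
`a k` of the neighbouring triangle; this apex lies on the `k`-th side of `4Δ₂`, and it minimises
the gap there.

If the three apexes are distinct, raising the coefficient at the apex of a shortest edge makes that
edge the unique shortest one. Otherwise two apexes coincide at a corner, by symmetry `(0,0)`. If the
third apex lies in the interior of the opposite side, adding a large multiple of a concave function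
that bends only along edges of the triangulation makes the third edge the shortest. If it is a
corner, by symmetry `(4,0)`, it competes with `(0,0)` on their common side, so the third edge is
never shorter than the other two, which are equally long. Hence a triangulation is non-generic iff
up to symmetry it contains the central triangle and its three neighbours with these apexes.

The triangulations containing this motif are enumerated by eliminating crossing triangles, and
they are certified as regular by explicit integer coefficient vectors.
-/

/-! ### Orientations and affine forms -/

/-- Twice the signed area of the triangle `a, b, c`; it is positive iff the triangle is
positively oriented, i.e. iff `c` lies to the left of the directed line `a → b`. -/
def ori (a b c : ℤ × ℤ) : ℤ := (b.1 - a.1) * (c.2 - a.2) - (b.2 - a.2) * (c.1 - a.1)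

/-- The affine form `x ↦ u x₁ + v x₂ + m`. -/
def affineForm (u v m : ℝ) : ℝ × ℝ →ᵃ[ℝ] ℝ :=
  u • (LinearMap.fst ℝ ℝ ℝ).toAffineMap + v • (LinearMap.snd ℝ ℝ ℝ).toAffineMap +
    AffineMap.const ℝ _ m

theorem affineForm_apply (u v m : ℝ) (x : ℝ × ℝ) :
    affineForm u v m x = u * x.1 + v * x.2 + m := by
  simp [affineForm]

theorem exists_eq_affineForm (f : ℝ × ℝ →ᵃ[ℝ] ℝ) : ∃ u v m : ℝ, f = affineForm u v m := by
  refine ⟨f.linear (1, 0), f.linear (0, 1), f 0, AffineMap.ext fun x => ?_⟩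
  have hx : x = x.1 • (1, 0) + x.2 • (0, 1) := by ext <;> simp
  have hf : f x = f.linear x + f 0 := congrFun f.decomp x
  rw [hf, affineForm_apply, hx, map_add, map_smul, map_smul]
  simp [mul_comm]

/-- The affine form `x ↦ ori a b x` on the real plane: it vanishes on the line `ab` and is
positive to the left of it. -/
def edgeForm (a b : ℤ × ℤ) : ℝ × ℝ →ᵃ[ℝ] ℝ :=
  affineForm (a.2 - b.2) (b.1 - a.1) (a.1 * b.2 - a.2 * b.1)

theorem edgeForm_apply (a b : ℤ × ℤ) (x : ℝ × ℝ) :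
    edgeForm a b x = ((b.1 : ℝ) - a.1) * (x.2 - a.2) - ((b.2 : ℝ) - a.2) * (x.1 - a.1) := by
  rw [edgeForm, affineForm_apply]; ring

theorem edgeForm_toR (a b p : ℤ × ℤ) : edgeForm a b (toR p) = ori a b p := by
  simp [edgeForm_apply, toR, ori]

theorem edgeForm_swap (a b : ℤ × ℤ) (x : ℝ × ℝ) : edgeForm b a x = -edgeForm a b x := by
  simp only [edgeForm_apply]; ring

theorem ori_self_left (a b : ℤ × ℤ) : ori a a b = 0 := by simp [ori]

theorem ori_self_right (a b : ℤ × ℤ) : ori a b b = 0 := by simp only [ori]; ring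

theorem ori_self_outer (a b : ℤ × ℤ) : ori a b a = 0 := by simp [ori]

theorem ori_rotate (a b c : ℤ × ℤ) : ori b c a = ori a b c := by simp only [ori]; ring

-- The coefficients are the barycentric coordinates of `x`, multiplied by `ori a b c`.
theorem ori_mul_affineMap (f : ℝ × ℝ →ᵃ[ℝ] ℝ) (a b c : ℤ × ℤ) (x : ℝ × ℝ) :
    ori a b c * f x = edgeForm b c x * f (toR a) + edgeForm c a x * f (toR b) +
      edgeForm a b x * f (toR c) := by
  obtain ⟨u, v, m, rfl⟩ := exists_eq_affineForm f
  simp only [affineForm_apply, edgeForm_apply, ori, toR]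
  push_cast
  ring

theorem ori_add_ori_add_ori (a b c p : ℤ × ℤ) :
    ori b c p + ori c a p + ori a b p = ori a b c := by
  simp only [ori]; ring

/-- The affine function with prescribed values at the vertices of a positively oriented
unimodular triangle `a, b, c`. -/
def interpolation (g : ℤ × ℤ → ℝ) (a b c : ℤ × ℤ) : ℝ × ℝ →ᵃ[ℝ] ℝ :=
  g a • edgeForm b c + g b • edgeForm c a + g c • edgeForm a b

theorem interpolation_toR (g : ℤ × ℤ → ℝ) (a b c p : ℤ × ℤ) :
    interpolation g a b c (toR p) = g a * ori b c p + g b * ori c a p + g c * ori a b p := by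
  simp [interpolation, edgeForm_toR]

theorem interpolation_eq_of_mem {a b c : ℤ × ℤ} (h : ori a b c = 1) (g : ℤ × ℤ → ℝ) :
    ∀ p ∈ ({a, b, c} : Finset (ℤ × ℤ)), interpolation g a b c (toR p) = g p := by
  simp [interpolation_toR, ori_self_outer, ori_self_right, ori_rotate, h]

/-! ### Convex hulls of lattice points -/

theorem toR_injective : Function.Injective toR := by
  intro p q h
  simpa [toR, Prod.ext_iff] using h

theorem mem_rhull {σ : Finset (ℤ × ℤ)} {x : ℝ × ℝ} :
    x ∈ rhull σ ↔ ∃ c : ℤ × ℤ → ℝ,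
      (∀ p ∈ σ, 0 ≤ c p) ∧ ∑ p ∈ σ, c p = 1 ∧ ∑ p ∈ σ, c p • toR p = x := by
  classical
  rw [rhull, ← Finset.coe_image, Finset.mem_convexHull']
  constructor
  · rintro ⟨c, hc⟩
    refine ⟨fun p => c (toR p), ?_⟩
    simpa only [Finset.forall_mem_image, Finset.sum_image toR_injective.injOn] using hc
  · rintro ⟨c, hc⟩
    refine ⟨fun x => c (Function.invFun toR x), ?_⟩
    simpa only [Finset.forall_mem_image, Finset.sum_image toR_injective.injOn,
      Function.leftInverse_invFun toR_injective _] using hc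

theorem convex_rhull (σ : Finset (ℤ × ℤ)) : Convex ℝ (rhull σ) := convex_convexHull ℝ _

theorem toR_mem_rhull {σ : Finset (ℤ × ℤ)} {p : ℤ × ℤ} (hp : p ∈ σ) : toR p ∈ rhull σ :=
  subset_convexHull ℝ _ ⟨p, hp, rfl⟩

theorem rhull_mono {σ τ : Finset (ℤ × ℤ)} (h : σ ⊆ τ) : rhull σ ⊆ rhull τ :=
  convexHull_mono (Set.image_mono (by exact_mod_cast h))

theorem affineMap_sum_smul_toR (f : ℝ × ℝ →ᵃ[ℝ] ℝ) {σ : Finset (ℤ × ℤ)} {c : ℤ × ℤ → ℝ}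
    (hc : ∑ p ∈ σ, c p = 1) : f (∑ p ∈ σ, c p • toR p) = ∑ p ∈ σ, c p * f (toR p) := by
  obtain ⟨u, v, m, rfl⟩ := exists_eq_affineForm f
  simp only [affineForm_apply, mul_add, Finset.sum_add_distrib, ← Finset.sum_mul, hc,
    Prod.fst_sum, Prod.snd_sum, Prod.smul_fst, Prod.smul_snd, smul_eq_mul, Finset.mul_sum,
    mul_left_comm, one_mul]

theorem affineMap_nonneg_of_mem_rhull {f : ℝ × ℝ →ᵃ[ℝ] ℝ} {σ : Finset (ℤ × ℤ)}
    (hf : ∀ p ∈ σ, 0 ≤ f (toR p)) {x : ℝ × ℝ} (hx : x ∈ rhull σ) : 0 ≤ f x := by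
  have hconvex : Convex ℝ (f ⁻¹' Set.Ici 0) := (convex_Ici 0).affine_preimage f
  refine convexHull_min ?_ hconvex hx
  rintro _ ⟨p, hp, rfl⟩
  exact hf p hp

theorem mem_rhull_triple {a b c : ℤ × ℤ} (h : 0 < ori a b c) {x : ℝ × ℝ} :
    x ∈ rhull {a, b, c} ↔
      0 ≤ edgeForm b c x ∧ 0 ≤ edgeForm c a x ∧ 0 ≤ edgeForm a b x := by
  constructor
  · intro hx
    have hnonneg : ∀ p q r : ℤ × ℤ, ori p q r = ori a b c → ({a, b, c} : Finset _) = {p, q, r} →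
        0 ≤ edgeForm p q x := by
      intro p q r hpqr heq
      refine affineMap_nonneg_of_mem_rhull ?_ (heq ▸ hx)
      simp [edgeForm_toR, ori_self_outer, ori_self_right, hpqr, h.le]
    exact ⟨hnonneg b c a (ori_rotate a b c) (by grind),
      hnonneg c a b (by rw [ori_rotate, ori_rotate]) (by grind), hnonneg a b c rfl rfl⟩
  · rintro ⟨ha, hb, hc⟩
    have hpos : (0 : ℝ) < ori a b c := by exact_mod_cast h
    have hx : x = (edgeForm b c x / ori a b c) • toR a + (edgeForm c a x / ori a b c) • toR b +
        (edgeForm a b x / ori a b c) • toR c := by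
      have hfst := ori_mul_affineMap (LinearMap.fst ℝ ℝ ℝ).toAffineMap a b c x
      have hsnd := ori_mul_affineMap (LinearMap.snd ℝ ℝ ℝ).toAffineMap a b c x
      simp only [LinearMap.coe_toAffineMap, LinearMap.fst_apply, LinearMap.snd_apply] at hfst hsnd
      ext <;> simp <;> field_simp <;> linarith
    have hsum : edgeForm b c x / ori a b c + edgeForm c a x / ori a b c +
        edgeForm a b x / ori a b c = 1 := by
      have := ori_mul_affineMap (AffineMap.const ℝ _ (1 : ℝ)) a b c x
      simp only [AffineMap.const_apply, mul_one] at this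
      field_simp
      exact this.symm
    rw [hx]
    have hmem := (convex_rhull {a, b, c}).sum_mem (t := univ) (z := ![toR a, toR b, toR c])
      (w := ![edgeForm b c x / ori a b c, edgeForm c a x / ori a b c, edgeForm a b x / ori a b c])
      (by simp [Fin.forall_fin_succ, div_nonneg, ha, hb, hc, hpos.le])
      (by simpa [Fin.sum_univ_three] using hsum)
      (by simp [Fin.forall_fin_succ, toR_mem_rhull])
    simpa [Fin.sum_univ_three] using hmem

/-! ### Supporting affine functions -/

/-- The affine function `f` is the supporting function of the regular subdivision of `lam` at
the cell `σ`: it lies above `lam` on `4Δ₂` and agrees with it exactly on `σ`. -/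
structure IsSupport (lam : ℤ × ℤ → ℝ) (f : ℝ × ℝ →ᵃ[ℝ] ℝ) (σ : Finset (ℤ × ℤ)) : Prop where
  subset : σ ⊆ latticePts
  eq : ∀ p ∈ σ, f (toR p) = lam p
  lt : ∀ p ∈ latticePts, p ∉ σ → lam p < f (toR p)

-- The argmax at `w` is supported by the affine form with linear part `-w`.
theorem exists_isArgmax_iff {lam : ℤ × ℤ → ℝ} {σ : Finset (ℤ × ℤ)} (hσ : σ.Nonempty) :
    (∃ w, IsArgmax lam w σ) ↔ ∃ f, IsSupport lam f σ := by
  obtain ⟨o, ho⟩ := hσ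
  constructor
  · rintro ⟨w, hw⟩
    have hmax := ((hw o).1 ho).2
    refine ⟨affineForm (-w.1) (-w.2) (mval lam o w), fun p hp => ((hw p).1 hp).1, ?_, ?_⟩
    · intro p hp
      have := hmax p ((hw p).1 hp).1
      have := ((hw p).1 hp).2 o ((hw o).1 ho).1
      simp only [affineForm_apply, mval, toR] at *
      linarith
    · intro p hp hpσ
      by_contra! hle
      refine hpσ ((hw p).2 ⟨hp, fun q hq => (hmax q hq).trans ?_⟩)
      simp only [affineForm_apply, mval, toR] at *
      linarith
  · rintro ⟨f, hf⟩
    obtain ⟨u, v, m, rfl⟩ := exists_eq_affineForm f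
    have heq : ∀ p ∈ σ, mval lam p (-u, -v) = m := by
      intro p hp
      have := hf.eq p hp
      simp only [affineForm_apply, mval, toR] at *
      linarith
    have hlt : ∀ p ∈ latticePts, p ∉ σ → mval lam p (-u, -v) < m := by
      intro p hp hpσ
      have := hf.lt p hp hpσ
      simp only [affineForm_apply, mval, toR] at *
      linarith
    refine ⟨(-u, -v), fun p => ⟨fun hp => ⟨hf.subset hp, fun q hq => ?_⟩, fun hp => ?_⟩⟩
    · by_cases hqσ : q ∈ σ
      · rw [heq p hp, heq q hqσ]
      · exact heq p hp ▸ (hlt q hq hqσ).le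
    · by_contra hpσ
      exact (hp.2 o (hf.subset ho)).not_gt (heq o ho ▸ hlt p hp.1 hpσ)

namespace IsSupport

variable {lam : ℤ × ℤ → ℝ} {f g : ℝ × ℝ →ᵃ[ℝ] ℝ} {σ τ : Finset (ℤ × ℤ)} {x : ℝ × ℝ}

theorem le (hf : IsSupport lam f σ) {p : ℤ × ℤ} (hp : p ∈ latticePts) : lam p ≤ f (toR p) := by
  by_cases hpσ : p ∈ σ
  · exact (hf.eq p hpσ).ge
  · exact (hf.lt p hp hpσ).le

theorem apply_le (hf : IsSupport lam f σ) (hg : IsSupport lam g τ) (hx : x ∈ rhull σ) :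
    f x ≤ g x := by
  refine sub_nonneg.1 (affineMap_nonneg_of_mem_rhull (f := g - f) (fun p hp => ?_) hx)
  simpa [hf.eq p hp] using hg.le (hf.subset hp)

theorem mem_of_pos (hf : IsSupport lam f σ) (hg : IsSupport lam g τ) {s : Finset (ℤ × ℤ)}
    (hs : s ⊆ τ) {c : ℤ × ℤ → ℝ} (hc : ∀ p ∈ s, 0 ≤ c p) (hsum : ∑ p ∈ s, c p = 1)
    (hmem : ∑ p ∈ s, c p • toR p ∈ rhull σ) {p : ℤ × ℤ} (hp : p ∈ s) (hpos : 0 < c p) :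
    p ∈ σ := by
  by_contra hpσ
  have hlat : ∀ q ∈ s, q ∈ latticePts := fun q hq => hg.subset (hs hq)
  have hlt : ∑ q ∈ s, c q * lam q < ∑ q ∈ s, c q * f (toR q) :=
    sum_lt_sum (fun q hq => mul_le_mul_of_nonneg_left (hf.le (hlat q hq)) (hc q hq))
      ⟨p, hp, mul_lt_mul_of_pos_left (hf.lt p (hlat p hp) hpσ) hpos⟩
  have heq : ∑ q ∈ s, c q * g (toR q) = ∑ q ∈ s, c q * lam q :=
    sum_congr rfl fun q hq => by rw [hg.eq q (hs hq)]
  have hle := hf.apply_le hg hmem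
  rw [affineMap_sum_smul_toR f hsum, affineMap_sum_smul_toR g hsum, heq] at hle
  exact hle.not_gt hlt

theorem rhull_inter (hf : IsSupport lam f σ) (hg : IsSupport lam g τ) :
    rhull σ ∩ rhull τ = rhull (σ ∩ τ) := by
  refine Set.Subset.antisymm ?_
    (Set.subset_inter (rhull_mono inter_subset_left) (rhull_mono inter_subset_right))
  rintro x ⟨hxσ, hxτ⟩
  obtain ⟨c, hc, hsum, rfl⟩ := mem_rhull.1 hxτ
  have hzero : ∀ p ∈ τ, p ∉ σ ∩ τ → c p = 0 := by
    intro p hp hpn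
    by_contra hne
    exact hpn (mem_inter.2
      ⟨hf.mem_of_pos hg subset_rfl hc hsum hxσ hp ((hc p hp).lt_of_ne' hne), hp⟩)
  refine mem_rhull.2 ⟨c, fun p hp => hc p (mem_of_mem_inter_right hp), ?_, ?_⟩
  · rw [sum_subset inter_subset_right hzero, hsum]
  · exact sum_subset inter_subset_right fun p hp hpn => by rw [hzero p hp hpn, zero_smul]

theorem subset_of_centroid_mem (hf : IsSupport lam f σ) (hg : IsSupport lam g τ)
    (hτ : τ.Nonempty) (hmem : ∑ p ∈ τ, (τ.card : ℝ)⁻¹ • toR p ∈ rhull σ) : τ ⊆ σ := by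
  have hpos : (0 : ℝ) < (τ.card : ℝ)⁻¹ := by simpa using hτ.card_pos
  exact fun p hp => hf.mem_of_pos hg subset_rfl (fun _ _ => hpos.le)
    (by simp [hτ.card_pos.ne']) hmem hp hpos

end IsSupport

theorem centroid_mem_rhull {σ : Finset (ℤ × ℤ)} (hσ : σ.Nonempty) :
    ∑ p ∈ σ, (σ.card : ℝ)⁻¹ • toR p ∈ rhull σ :=
  mem_rhull.2 ⟨fun _ => (σ.card : ℝ)⁻¹, fun _ _ => by positivity, by simp [hσ.card_pos.ne'], rfl⟩

/-! ### Curves dual to a unimodular triangulation -/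

theorem IsUnimodularTriangle.exists_ori_eq_one {σ : Finset (ℤ × ℤ)}
    (h : IsUnimodularTriangle σ) : ∃ a b c, ori a b c = 1 ∧ σ = {a, b, c} := by
  obtain ⟨a, b, c, rfl, habc⟩ := h
  rcases Int.natAbs_eq_iff.1 habc with h | h
  · exact ⟨a, b, c, h, rfl⟩
  · exact ⟨b, a, c, by simp only [ori]; push_cast at h; linarith, insert_comm _ _ _⟩

theorem isUnimodularTriangle_of_ori_eq_one {a b c : ℤ × ℤ} (h : ori a b c = 1) :
    IsUnimodularTriangle {a, b, c} :=
  ⟨a, b, c, rfl, by rw [← ori, h]; rfl⟩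

theorem card_eq_three_of_ori_ne_zero {a b c : ℤ × ℤ} (h : ori a b c ≠ 0) :
    ({a, b, c} : Finset (ℤ × ℤ)).card = 3 := by
  refine card_eq_three.2 ⟨a, b, c, ?_, ?_, ?_, rfl⟩ <;> rintro rfl
  · exact h (ori_self_left _ _)
  · exact h (ori_self_outer _ _)
  · exact h (ori_self_right _ _)

theorem IsUnimodularTriangle.card_eq_three {σ : Finset (ℤ × ℤ)} (h : IsUnimodularTriangle σ) :
    σ.card = 3 := by
  obtain ⟨a, b, c, habc, rfl⟩ := h.exists_ori_eq_one
  exact card_eq_three_of_ori_ne_zero (by rw [habc]; exact one_ne_zero)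

/-- The quartic with coefficient vector `lam` is smooth with dual subdivision `T`. -/
structure IsDual (T : Finset (Finset (ℤ × ℤ))) (lam : ℤ × ℤ → ℝ) : Prop where
  triangulation : IsUnimodularTriangulation T
  induces : Induces lam T

theorem isRegularUnimodularTriangulation_iff {T : Finset (Finset (ℤ × ℤ))} :
    IsRegularUnimodularTriangulation T ↔ ∃ lam, IsDual T lam :=
  ⟨fun ⟨hT, lam, h⟩ => ⟨lam, hT, h⟩, fun ⟨lam, h⟩ => ⟨h.triangulation, lam, h.induces⟩⟩

theorem Induces.unique {lam : ℤ × ℤ → ℝ} {T T' : Finset (Finset (ℤ × ℤ))} (h : Induces lam T)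
    (h' : Induces lam T') : T = T' :=
  Finset.ext fun σ => (h σ).trans (h' σ).symm

theorem isDual_of_forall_exists_isSupport {T : Finset (Finset (ℤ × ℤ))} {lam : ℤ × ℤ → ℝ}
    (hunimodular : ∀ σ ∈ T, IsUnimodularTriangle σ)
    (hcover : ∀ x ∈ rhull latticePts, ∃ σ ∈ T, x ∈ rhull σ)
    (hsupport : ∀ σ ∈ T, ∃ f, IsSupport lam f σ) : IsDual T lam := by
  have hnonempty : ∀ σ ∈ T, σ.Nonempty := fun σ hσ =>
    card_pos.1 ((hunimodular σ hσ).card_eq_three ▸ three_pos)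
  have hsubset : ∀ σ ∈ T, σ ⊆ latticePts := fun σ hσ => (hsupport σ hσ).choose_spec.subset
  refine ⟨⟨fun σ hσ => ⟨hsubset σ hσ, hunimodular σ hσ⟩, ?_, ?_⟩, fun σ => ⟨?_, ?_⟩⟩
  · refine Set.Subset.antisymm (Set.iUnion₂_subset fun σ hσ => rhull_mono (hsubset σ hσ)) ?_
    simpa [Set.subset_def] using hcover
  · intro σ hσ τ hτ
    obtain ⟨f, hf⟩ := hsupport σ hσ
    obtain ⟨g, hg⟩ := hsupport τ hτ
    exact hf.rhull_inter hg
  · exact fun hσ => ⟨(hunimodular σ hσ).card_eq_three.ge,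
      (exists_isArgmax_iff (hnonempty σ hσ)).2 (hsupport σ hσ)⟩
  · rintro ⟨hcard, hargmax⟩
    have hσ : σ.Nonempty := card_pos.1 (three_pos.trans_le hcard)
    obtain ⟨f, hf⟩ := (exists_isArgmax_iff hσ).1 hargmax
    obtain ⟨τ, hτ, hmem⟩ := hcover _ (rhull_mono hf.subset (centroid_mem_rhull hσ))
    obtain ⟨g, hg⟩ := hsupport τ hτ
    have hsub := hg.subset_of_centroid_mem hf hσ hmem
    rwa [eq_of_subset_of_card_le hsub ((hunimodular τ hτ).card_eq_three.trans_le hcard)]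

namespace IsDual

variable {T : Finset (Finset (ℤ × ℤ))} {lam : ℤ × ℤ → ℝ} {σ τ : Finset (ℤ × ℤ)}

theorem subset_latticePts (h : IsDual T lam) (hσ : σ ∈ T) : σ ⊆ latticePts :=
  (h.triangulation.1 σ hσ).1

theorem isUnimodularTriangle (h : IsDual T lam) (hσ : σ ∈ T) : IsUnimodularTriangle σ :=
  (h.triangulation.1 σ hσ).2

theorem exists_mem_rhull (h : IsDual T lam) {x : ℝ × ℝ} (hx : x ∈ rhull latticePts) :
    ∃ σ ∈ T, x ∈ rhull σ := by
  simpa [← h.triangulation.2.1] using hx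

theorem exists_isSupport (h : IsDual T lam) (hσ : σ ∈ T) : ∃ f, IsSupport lam f σ := by
  have hcard := ((h.induces σ).1 hσ).1
  exact (exists_isArgmax_iff (card_pos.1 (three_pos.trans_le hcard))).1 ((h.induces σ).1 hσ).2

theorem of_forall_exists_isSupport (h : IsDual T lam) {lam' : ℤ × ℤ → ℝ}
    (hsupport : ∀ σ ∈ T, ∃ f, IsSupport lam' f σ) : IsDual T lam' :=
  isDual_of_forall_exists_isSupport (fun _ => h.isUnimodularTriangle)
    (fun _ => h.exists_mem_rhull) hsupport

theorem add_smul_of_le (h : IsDual T lam) {g : ℤ × ℤ → ℝ}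
    (hg : ∀ σ ∈ T, ∃ v : ℝ × ℝ →ᵃ[ℝ] ℝ,
      (∀ p ∈ σ, v (toR p) = g p) ∧ ∀ p ∈ latticePts, g p ≤ v (toR p))
    {s : ℝ} (hs : 0 ≤ s) : IsDual T (lam + s • g) := by
  refine h.of_forall_exists_isSupport fun σ hσ => ?_
  obtain ⟨f, hf⟩ := h.exists_isSupport hσ
  obtain ⟨v, hv, hle⟩ := hg σ hσ
  refine ⟨f + s • v, hf.subset, fun p hp => ?_, fun p hp hpσ => ?_⟩
  · simp [hf.eq p hp, hv p hp]
  · simpa using add_lt_add_of_lt_of_le (hf.lt p hp hpσ) (mul_le_mul_of_nonneg_left (hle p hp) hs)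

theorem exists_pos_add_smul (h : IsDual T lam) (g : ℤ × ℤ → ℝ) :
    ∃ ε > (0 : ℝ), IsDual T (lam + ε • g) := by
  have hsupport : ∀ σ ∈ T, ∀ᶠ ε in nhds (0 : ℝ), ∃ f, IsSupport (lam + ε • g) f σ := by
    intro σ hσ
    obtain ⟨f, hf⟩ := h.exists_isSupport hσ
    obtain ⟨a, b, c, habc, rfl⟩ := (h.isUnimodularTriangle hσ).exists_ori_eq_one
    set v := interpolation g a b c
    have hlt : ∀ p ∈ latticePts, ∀ᶠ ε in nhds (0 : ℝ), p ∉ ({a, b, c} : Finset (ℤ × ℤ)) →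
        lam p + ε * g p < f (toR p) + ε * v (toR p) := by
      intro p hp
      by_cases hpσ : p ∈ ({a, b, c} : Finset (ℤ × ℤ))
      · exact .of_forall fun _ hn => (hn hpσ).elim
      · have hcont : ∀ r s : ℝ, ContinuousAt (fun ε => r + ε * s) 0 := fun r s => by fun_prop
        exact ((hcont _ _).eventually_lt (hcont _ _) (by simpa using hf.lt p hp hpσ)).mono
          fun _ hε _ => hε
    filter_upwards [(Filter.eventually_all_finset latticePts).2 hlt] with ε hε
    refine ⟨f + ε • v, hf.subset, fun p hp => ?_, fun p hp hpσ => by simpa using hε p hp hpσ⟩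
    simp [hf.eq p hp, v, interpolation_eq_of_mem habc g p hp]
  have hsupport' := (Filter.eventually_all_finset T).2 hsupport
  obtain ⟨ε, hε, hpos⟩ := ((hsupport'.filter_mono nhdsWithin_le_nhds).and
    (self_mem_nhdsWithin (s := Set.Ioi 0))).exists
  exact ⟨ε, hpos, h.of_forall_exists_isSupport hε⟩

end IsDual

/-! ### Crossing segments -/

/-- The open segments `pq` and `ab` cross transversally. -/
def Crosses (p q a b : ℤ × ℤ) : Prop :=
  ori p q a * ori p q b < 0 ∧ ori a b p * ori a b q < 0

/-- No segment spanned by `σ` crosses a segment spanned by `τ`; cells of a common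
triangulation have this property. -/
def Compatible (σ τ : Finset (ℤ × ℤ)) : Prop :=
  ∀ p ∈ σ, ∀ q ∈ σ, ∀ a ∈ τ, ∀ b ∈ τ, ¬Crosses p q a b

instance (p q a b : ℤ × ℤ) : Decidable (Crosses p q a b) := by unfold Crosses; infer_instance

instance (σ τ : Finset (ℤ × ℤ)) : Decidable (Compatible σ τ) := by
  unfold Compatible; infer_instance

theorem Compatible.mono {σ σ' τ τ' : Finset (ℤ × ℤ)} (h : Compatible σ τ) (hσ : σ' ⊆ σ)
    (hτ : τ' ⊆ τ) : Compatible σ' τ' :=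
  fun p hp q hq a ha b hb => h p (hσ hp) q (hσ hq) a (hτ ha) b (hτ hb)

theorem div_sub_pos_of_mul_neg {s t : ℝ} (h : s * t < 0) : 0 < t / (t - s) ∧ 0 < -s / (t - s) := by
  rcases mul_neg_iff.1 h with ⟨hs, ht⟩ | ⟨hs, ht⟩
  · exact ⟨div_pos_of_neg_of_neg ht (by linarith),
      div_pos_of_neg_of_neg (by linarith) (by linarith)⟩
  · exact ⟨div_pos ht (by linarith), div_pos (by linarith) (by linarith)⟩

theorem Crosses.exists_mem_openSegment {p q a b : ℤ × ℤ} (h : Crosses p q a b) :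
    ∃ x, x ∈ openSegment ℝ (toR p) (toR q) ∧ x ∈ openSegment ℝ (toR a) (toR b) := by
  obtain ⟨hpq, hab⟩ : (ori p q a : ℝ) * ori p q b < 0 ∧ (ori a b p : ℝ) * ori a b q < 0 := by
    exact_mod_cast h
  obtain ⟨hb, ha⟩ := div_sub_pos_of_mul_neg hpq
  obtain ⟨hq, hp⟩ := div_sub_pos_of_mul_neg ((mul_comm _ _).trans_lt hab)
  have hdenom : (ori a b p : ℝ) - ori a b q = ori p q b - ori p q a := by
    simp only [ori]; push_cast; ring
  rw [hdenom] at hp hq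
  have hne : (ori p q b : ℝ) - ori p q a ≠ 0 := fun hzero => by simp [hzero] at hb
  refine ⟨_, ⟨_, _, hp, hq, ?_, rfl⟩, ⟨_, _, hb, ha, ?_, ?_⟩⟩
  · field_simp; linarith
  · field_simp; ring
  · simp only [ori] at hne ⊢
    push_cast at hne ⊢
    ext <;> simp only [toR, Prod.fst_add, Prod.snd_add, Prod.smul_fst, Prod.smul_snd,
      smul_eq_mul] <;> field_simp <;> ring

theorem IsSupport.mem_of_mem_openSegment {lam : ℤ × ℤ → ℝ} {f g : ℝ × ℝ →ᵃ[ℝ] ℝ}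
    {σ τ : Finset (ℤ × ℤ)} (hf : IsSupport lam f σ) (hg : IsSupport lam g τ) {a b : ℤ × ℤ}
    (ha : a ∈ τ) (hb : b ∈ τ) {x : ℝ × ℝ} (hx : x ∈ openSegment ℝ (toR a) (toR b))
    (hxσ : x ∈ rhull σ) : a ∈ σ := by
  by_contra haσ
  obtain ⟨s, t, hs, ht, hst, rfl⟩ := hx
  have hle := hf.apply_le hg hxσ
  rw [Convex.combo_affine_apply hst, Convex.combo_affine_apply hst, hg.eq a ha, hg.eq b hb] at hle
  have hlt := mul_lt_mul_of_pos_left (hf.lt a (hg.subset ha) haσ) hs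
  have hle' := mul_le_mul_of_nonneg_left (hf.le (hg.subset hb)) ht.le
  simp only [smul_eq_mul] at hle
  linarith

theorem IsDual.compatible {T : Finset (Finset (ℤ × ℤ))} {lam : ℤ × ℤ → ℝ} (h : IsDual T lam)
    {σ τ : Finset (ℤ × ℤ)} (hσ : σ ∈ T) (hτ : τ ∈ T) : Compatible σ τ := by
  intro p hp q hq a ha b hb hcross
  obtain ⟨f, hf⟩ := h.exists_isSupport hσ
  obtain ⟨g, hg⟩ := h.exists_isSupport hτ
  obtain ⟨x, hxpq, hxab⟩ := hcross.exists_mem_openSegment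
  have hxσ : x ∈ rhull σ := (convex_rhull σ).segment_subset (toR_mem_rhull hp) (toR_mem_rhull hq)
    (openSegment_subset_segment _ _ _ hxpq)
  have haσ := hf.mem_of_mem_openSegment hg ha hb hxab hxσ
  have hbσ := hf.mem_of_mem_openSegment hg hb ha (openSegment_symm ℝ (toR a) _ ▸ hxab) hxσ
  have hdistinct : p ≠ q ∧ a ≠ b ∧ p ≠ a ∧ p ≠ b ∧ q ≠ a ∧ q ≠ b := by
    refine ⟨?_, ?_, ?_, ?_, ?_, ?_⟩ <;> rintro rfl <;>
      simp [Crosses, ori_self_left, ori_self_right, ori_self_outer] at hcross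
  have hcard : ({p, q, a, b} : Finset (ℤ × ℤ)).card = 4 := by grind
  have hle := card_le_card (show {p, q, a, b} ⊆ σ by grind)
  rw [hcard, (h.isUnimodularTriangle hσ).card_eq_three] at hle
  omega

/-! ### The unimodular triangles in `4Δ₂` -/

/-- The unimodular lattice triangles contained in `4Δ₂`, as an explicit finite set. -/
def unimodularCells : Finset (Finset (ℤ × ℤ)) :=
  {σ ∈ latticePts.powersetCard 3 | ∃ a ∈ σ, ∃ b ∈ σ, ∃ c ∈ σ, ori a b c = 1}

theorem mem_unimodularCells {σ : Finset (ℤ × ℤ)} :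
    σ ∈ unimodularCells ↔ σ ⊆ latticePts ∧ IsUnimodularTriangle σ := by
  rw [unimodularCells, mem_filter, mem_powersetCard]
  constructor
  · rintro ⟨⟨hsub, hcard⟩, a, ha, b, hb, c, hc, habc⟩
    have hcard' := card_eq_three_of_ori_ne_zero (habc.symm ▸ one_ne_zero : ori a b c ≠ 0)
    have hσ : {a, b, c} = σ := eq_of_subset_of_card_le (by grind) (by rw [hcard, hcard'])
    exact ⟨hsub, hσ ▸ isUnimodularTriangle_of_ori_eq_one habc⟩
  · rintro ⟨hsub, hσ⟩
    refine ⟨⟨hsub, hσ.card_eq_three⟩, ?_⟩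
    obtain ⟨a, b, c, habc, rfl⟩ := hσ.exists_ori_eq_one
    exact ⟨a, by simp, b, by simp, c, by simp, habc⟩

theorem IsDual.mem_unimodularCells {T : Finset (Finset (ℤ × ℤ))} {lam : ℤ × ℤ → ℝ}
    (h : IsDual T lam) {σ : Finset (ℤ × ℤ)} (hσ : σ ∈ T) : σ ∈ unimodularCells :=
  _root_.mem_unimodularCells.2 (h.triangulation.1 σ hσ)

/-- The rational point `N⁻¹ X` lies in the unimodular triangle `σ`; denominators are cleared to
make this decidable. -/
def CoversPt (N : ℤ) (X : ℤ × ℤ) (σ : Finset (ℤ × ℤ)) : Prop :=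
  ∀ a ∈ σ, ∀ b ∈ σ, ∀ c ∈ σ, ori a b c = 1 → 0 ≤ ori (N • a) (N • b) X

instance (N : ℤ) (X : ℤ × ℤ) (σ : Finset (ℤ × ℤ)) : Decidable (CoversPt N X σ) := by
  unfold CoversPt; infer_instance

theorem ori_smul_smul {N : ℤ} (hN : N ≠ 0) (a b X : ℤ × ℤ) :
    (ori (N • a) (N • b) X : ℝ) = N ^ 2 * edgeForm a b ((N : ℝ)⁻¹ • toR X) := by
  have hN' : (N : ℝ) ≠ 0 := by exact_mod_cast hN
  simp only [ori, edgeForm_apply, toR, Prod.smul_fst, Prod.smul_snd, smul_eq_mul]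
  push_cast
  field_simp

theorem coversPt_of_mem_rhull {N : ℤ} (hN : N ≠ 0) {X : ℤ × ℤ} {σ : Finset (ℤ × ℤ)}
    (hσ : σ.card ≤ 3) (hX : (N : ℝ)⁻¹ • toR X ∈ rhull σ) : CoversPt N X σ := by
  intro a ha b hb c hc habc
  have hcard := card_eq_three_of_ori_ne_zero (habc.symm ▸ one_ne_zero : ori a b c ≠ 0)
  have heq : {a, b, c} = σ := eq_of_subset_of_card_le (by grind) (hσ.trans hcard.ge)
  have hform := ((mem_rhull_triple (habc.symm ▸ one_pos)).1 (heq ▸ hX)).2.2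
  have hnonneg : (0 : ℝ) ≤ ori (N • a) (N • b) X := by rw [ori_smul_smul hN]; positivity
  exact_mod_cast hnonneg

theorem inv_smul_toR_mem_rhull_latticePts {N : ℤ} (hN : 0 < N) {X : ℤ × ℤ} (h₁ : 0 ≤ X.1)
    (h₂ : 0 ≤ X.2) (h₃ : X.1 + X.2 ≤ 4 * N) : (N : ℝ)⁻¹ • toR X ∈ rhull latticePts := by
  have hcorners : ({(0, 0), (4, 0), (0, 4)} : Finset (ℤ × ℤ)) ⊆ latticePts := by decide +kernel
  have hform : ∀ a b : ℤ × ℤ, 0 ≤ ori (N • a) (N • b) X →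
      0 ≤ edgeForm a b ((N : ℝ)⁻¹ • toR X) := by
    intro a b hab
    have hN2 : (0 : ℝ) < N ^ 2 := by positivity
    have hab' : (0 : ℝ) ≤ ori (N • a) (N • b) X := by exact_mod_cast hab
    rw [ori_smul_smul hN.ne'] at hab'
    exact nonneg_of_mul_nonneg_right hab' hN2
  refine rhull_mono hcorners ((mem_rhull_triple (by decide)).2 ⟨?_, ?_, ?_⟩) <;>
    refine hform _ _ ?_ <;> simp [ori] <;> nlinarith

theorem IsDual.exists_coversPt {T : Finset (Finset (ℤ × ℤ))} {lam : ℤ × ℤ → ℝ}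
    (h : IsDual T lam) {N : ℤ} (hN : 0 < N) {X : ℤ × ℤ} (h₁ : 0 ≤ X.1) (h₂ : 0 ≤ X.2)
    (h₃ : X.1 + X.2 ≤ 4 * N) : ∃ σ ∈ T, CoversPt N X σ := by
  obtain ⟨σ, hσ, hmem⟩ := h.exists_mem_rhull (inv_smul_toR_mem_rhull_latticePts hN h₁ h₂ h₃)
  exact ⟨σ, hσ, coversPt_of_mem_rhull hN.ne' (h.isUnimodularTriangle hσ).card_eq_three.le hmem⟩

theorem mem_of_toR_mem_rhull {σ : Finset (ℤ × ℤ)} (hσ : IsUnimodularTriangle σ) {p : ℤ × ℤ}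
    (hp : toR p ∈ rhull σ) : p ∈ σ := by
  obtain ⟨a, b, c, habc, rfl⟩ := hσ.exists_ori_eq_one
  obtain ⟨ha, hb, hc⟩ := (mem_rhull_triple (habc.symm ▸ one_pos)).1 hp
  simp only [edgeForm_toR, Int.cast_nonneg_iff] at ha hb hc
  have hsum := ori_add_ori_add_ori a b c p
  have hp1 : p.1 = ori b c p * a.1 + ori c a p * b.1 + ori a b p * c.1 := by
    linear_combination (norm := skip) (-p.1) * habc; simp only [ori]; ring
  have hp2 : p.2 = ori b c p * a.2 + ori c a p * b.2 + ori a b p * c.2 := by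
    linear_combination (norm := skip) (-p.2) * habc; simp only [ori]; ring
  rw [habc] at hsum
  have hcases : (ori b c p = 1 ∧ ori c a p = 0 ∧ ori a b p = 0) ∨
      (ori b c p = 0 ∧ ori c a p = 1 ∧ ori a b p = 0) ∨
      (ori b c p = 0 ∧ ori c a p = 0 ∧ ori a b p = 1) := by omega
  rcases hcases with ⟨ha, hb, hc⟩ | ⟨ha, hb, hc⟩ | ⟨ha, hb, hc⟩ <;>
    simp [ha, hb, hc] at hp1 hp2 <;> simp [Prod.ext_iff, hp1, hp2]

theorem IsDual.refines_iff_subset {T S : Finset (Finset (ℤ × ℤ))} {lam : ℤ × ℤ → ℝ}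
    (h : IsDual T lam) (hS : ∀ τ ∈ S, IsUnimodularTriangle τ) : Refines T S ↔ S ⊆ T := by
  constructor
  · intro hrefines τ hτ
    have hcard := (hS τ hτ).card_eq_three
    have hnonempty : τ.Nonempty := card_pos.1 (hcard ▸ three_pos)
    have hcentroid := centroid_mem_rhull hnonempty
    rw [hrefines τ hτ] at hcentroid
    simp only [Set.mem_iUnion] at hcentroid
    obtain ⟨σ, hσ, hsub, -⟩ := hcentroid
    have hστ : σ ⊆ τ := fun p hp => mem_of_toR_mem_rhull (hS τ hτ) (hsub (toR_mem_rhull hp))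
    have hcard' := (h.isUnimodularTriangle hσ).card_eq_three
    exact eq_of_subset_of_card_le hστ (hcard.trans hcard'.symm).le ▸ hσ
  · intro hsub τ hτ
    refine Set.Subset.antisymm (fun x hx => ?_) (Set.iUnion₂_subset fun σ _ => Set.iUnion_subset id)
    exact Set.mem_iUnion₂.2 ⟨τ, hsub hτ, Set.mem_iUnion.2 ⟨subset_rfl, hx⟩⟩

/-! ### The edges at a vertex dual to a downward triangle -/

theorem bar3_nonneg {p : ℤ × ℤ} (hp : p ∈ latticePts) (k : Fin 3) : 0 ≤ bar3 p k := by
  simp only [latticePts, mem_filter, mem_product, mem_Icc] at hp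
  fin_cases k <;> simp [bar3] <;> omega

/-- The primitive directions `-e₁`, `-e₂`, `e₁ + e₂`, indexed so that direction `k` decreases
the `k`-th barycentric coordinate of the exponents fastest. -/
def rayDir : Fin 3 → ℝ × ℝ := ![(-1, 0), (0, -1), (1, 1)]

/-- The set of `t ≥ 0` for which `w + t · rayDir k` lies on the dual edge of `{a, b}`; it is
`edgeSet1`, `edgeSet2` and `edgeSet3` for `k = 0, 1, 2`. -/
def edgeRay (lam : ℤ × ℤ → ℝ) (a b : ℤ × ℤ) (w : ℝ × ℝ) (k : Fin 3) : Set ℝ :=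
  {t | 0 ≤ t ∧ OnDualEdge lam a b (w + t • rayDir k)}

theorem mval_add_smul_rayDir (lam : ℤ × ℤ → ℝ) (r : ℤ × ℤ) (w : ℝ × ℝ) (t : ℝ) (k : Fin 3) :
    mval lam r (w + t • rayDir k) = mval lam r w + t * (![0, 0, 4] k - bar3 r k) := by
  fin_cases k <;> simp [mval, rayDir, bar3] <;> ring

section

variable (lam : ℤ × ℤ → ℝ) (p : ℤ × ℤ)

theorem edgeSet1_eq_edgeRay : edgeSet1 lam p = edgeRay lam p (pE2 p) (dvtx lam p) 0 := by
  simp [edgeSet1, edgeRay, rayDir, Prod.add_def, sub_eq_add_neg]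

theorem edgeSet2_eq_edgeRay : edgeSet2 lam p = edgeRay lam p (pE1 p) (dvtx lam p) 1 := by
  simp [edgeSet2, edgeRay, rayDir, Prod.add_def, sub_eq_add_neg]

theorem edgeSet3_eq_edgeRay : edgeSet3 lam p = edgeRay lam (pE1 p) (pE2 p) (dvtx lam p) 2 := by
  simp [edgeSet3, edgeRay, rayDir, Prod.add_def]

end

theorem IsArgmax.onDualEdge {lam : ℤ × ℤ → ℝ} {w : ℝ × ℝ} {σ : Finset (ℤ × ℤ)}
    (hw : IsArgmax lam w σ) {a b : ℤ × ℤ} (ha : a ∈ σ) (hb : b ∈ σ) : OnDualEdge lam a b w :=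
  ⟨le_antisymm (((hw b).1 hb).2 a ((hw a).1 ha).1) (((hw a).1 ha).2 b ((hw b).1 hb).1),
    ((hw a).1 ha).2⟩

theorem IsArgmax.eq_dvtx {lam : ℤ × ℤ → ℝ} {w : ℝ × ℝ} {p : ℤ × ℤ}
    (hw : IsArgmax lam w (downTri p)) : w = dvtx lam p := by
  have h₁ := (hw.onDualEdge (a := p) (b := pE1 p) (by simp [downTri]) (by simp [downTri])).1
  have h₂ := (hw.onDualEdge (a := p) (b := pE2 p) (by simp [downTri]) (by simp [downTri])).1
  simp only [mval, pE1, pE2] at h₁ h₂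
  push_cast at h₁ h₂
  ext <;> simp only [dvtx, pE1, pE2] <;> linarith

section

variable {lam : ℤ × ℤ → ℝ} {a b q : ℤ × ℤ} {w : ℝ × ℝ} {k : Fin 3}

theorem not_bddAbove_edgeRay (h : OnDualEdge lam a b w) (ha : bar3 a k = 0) (hb : bar3 b k = 0) :
    ¬BddAbove (edgeRay lam a b w k) := by
  suffices hsub : Set.Ici 0 ⊆ edgeRay lam a b w k from fun hbdd =>
    not_bddAbove_Ici (0 : ℝ) (hbdd.mono hsub)
  refine fun t (ht : 0 ≤ t) => ⟨ht, ?_, ?_⟩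
  · rw [mval_add_smul_rayDir, mval_add_smul_rayDir, h.1, ha, hb]
  · intro r hr
    have hbar : (0 : ℝ) ≤ bar3 r k := by exact_mod_cast bar3_nonneg hr k
    rw [mval_add_smul_rayDir, mval_add_smul_rayDir, ha]
    push_cast
    nlinarith [h.2 r hr, mul_nonneg ht hbar]

theorem edgeRay_eq_Icc (h : OnDualEdge lam a b w) (ha : bar3 a k = 1) (hb : bar3 b k = 1)
    (hq : q ∈ latticePts) (hqk : bar3 q k = 0)
    (hmax : ∀ p ∈ latticePts, bar3 p k = 0 → mval lam p w ≤ mval lam q w) :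
    edgeRay lam a b w k = Set.Icc 0 (mval lam a w - mval lam q w) := by
  ext t
  simp only [edgeRay, Set.mem_ofPred_eq, Set.mem_Icc, OnDualEdge, mval_add_smul_rayDir, ha, hb, h.1,
    true_and, and_congr_right_iff]
  refine fun ht => ⟨fun hle => ?_, fun hle r hr => ?_⟩
  · have := hle q hq
    rw [hqk] at this
    push_cast at this
    linarith
  · rcases (bar3_nonneg hr k).eq_or_lt with hrk | hrk
    · rw [← hrk]
      push_cast
      linarith [hmax r hr hrk.symm]
    · have hbar : (1 : ℝ) ≤ bar3 r k := by exact_mod_cast hrk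
      push_cast
      nlinarith [h.2 r hr, h.1, mul_nonneg ht (sub_nonneg.2 hbar)]

end

theorem HasCVertexAt.eq_one_one {lam : ℤ × ℤ → ℝ} {p : ℤ × ℤ} (h : HasCVertexAt lam p) :
    p = (1, 1) := by
  obtain ⟨⟨w, hw⟩, h₁, h₂, h₃⟩ := h
  have hlat : ∀ q ∈ downTri p, q ∈ latticePts := fun q hq => ((hw q).1 hq).1
  obtain rfl := hw.eq_dvtx
  rw [edgeSet1_eq_edgeRay] at h₁
  rw [edgeSet2_eq_edgeRay] at h₂
  rw [edgeSet3_eq_edgeRay] at h₃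
  have hp₁ : p.1 ≠ 0 := fun h0 => not_bddAbove_edgeRay
    (hw.onDualEdge (by simp [downTri]) (by simp [downTri])) (by simpa [bar3])
    (by simpa [bar3, pE2]) h₁
  have hp₂ : p.2 ≠ 0 := fun h0 => not_bddAbove_edgeRay
    (hw.onDualEdge (by simp [downTri]) (by simp [downTri])) (by simpa [bar3])
    (by simpa [bar3, pE1]) h₂
  have hp₃ : p.1 + p.2 ≠ 3 := fun h0 => not_bddAbove_edgeRay
    (hw.onDualEdge (by simp [downTri]) (by simp [downTri])) (by simp [bar3, pE1]; omega)
    (by simp [bar3, pE2]; omega) h₃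
  simp only [downTri, mem_insert, mem_singleton, forall_eq_or_imp, forall_eq, latticePts, pE1, pE2,
    mem_filter, mem_product, mem_Icc] at hlat
  ext <;> simp only <;> omega

/-! ### The central triangle and its neighbours -/

/-- The interior lattice points of `4Δ₂`, labelled by their largest barycentric coordinate. -/
def centralVertex : Fin 3 → ℤ × ℤ := ![(2, 1), (1, 2), (1, 1)]

/-- The triangle of interior lattice points of `4Δ₂`. -/
def centralTriangle : Finset (ℤ × ℤ) := univ.image centralVertex

/-- The triangle with apex `q` over the edge of the central triangle opposite to
`centralVertex k`. -/
def flank (k : Fin 3) (q : ℤ × ℤ) : Finset (ℤ × ℤ) :=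
  insert q ((univ.erase k).image centralVertex)

/-- The amount by which the monomial with exponent `p` falls short of the maximum at the vertex
dual to the central triangle. -/
def gap (lam : ℤ × ℤ → ℝ) (p : ℤ × ℤ) : ℝ :=
  ∑ k, (bar3 p k - 1) * lam (centralVertex k) - lam p

theorem centralTriangle_eq_downTri : centralTriangle = downTri (1, 1) := by decide +kernel

theorem centralVertex_mem_flank {j k : Fin 3} (h : j ≠ k) {q : ℤ × ℤ} :
    centralVertex j ∈ flank k q :=
  mem_insert_of_mem (mem_image_of_mem _ (mem_erase.2 ⟨h, mem_univ j⟩))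

theorem gap_eq_sub (lam : ℤ × ℤ → ℝ) (p : ℤ × ℤ) :
    gap lam p = mval lam (1, 1) (dvtx lam (1, 1)) - mval lam p (dvtx lam (1, 1)) := by
  simp [gap, Fin.sum_univ_three, bar3, centralVertex, mval, dvtx, pE1, pE2]
  ring

theorem affineMap_toR_eq_sum (f : ℝ × ℝ →ᵃ[ℝ] ℝ) (p : ℤ × ℤ) :
    f (toR p) = ∑ k, (bar3 p k - 1) * f (toR (centralVertex k)) := by
  obtain ⟨u, v, m, rfl⟩ := exists_eq_affineForm f
  simp [affineForm_apply, Fin.sum_univ_three, bar3, centralVertex, toR]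
  ring

theorem IsSupport.gap_eq {lam : ℤ × ℤ → ℝ} {f : ℝ × ℝ →ᵃ[ℝ] ℝ} {k : Fin 3} {q : ℤ × ℤ}
    (hf : IsSupport lam f (flank k q)) {p : ℤ × ℤ} (hp : bar3 p k = 0) :
    gap lam p = f (toR (centralVertex k)) - lam (centralVertex k) + (f (toR p) - lam p) := by
  have hsingle : ∑ j, (bar3 p j - 1) * (lam (centralVertex j) - f (toR (centralVertex j))) =
      f (toR (centralVertex k)) - lam (centralVertex k) := by
    rw [Fintype.sum_eq_single k fun j hj => ?_, hp]
    · push_cast; ring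
    · rw [hf.eq (centralVertex j) (centralVertex_mem_flank hj), sub_self, mul_zero]
  rw [← hsingle, affineMap_toR_eq_sum f p, gap]
  simp only [mul_sub, sum_sub_distrib]
  ring

/-- The central triangle belongs to `T`, and the triangle of `T` on the other side of each of its
edges has its apex `a k` on the `k`-th side of `4Δ₂`. -/
structure IsApexFamily (T : Finset (Finset (ℤ × ℤ))) (a : Fin 3 → ℤ × ℤ) : Prop where
  centralTriangle_mem : centralTriangle ∈ T
  bar3_eq_zero : ∀ k, bar3 (a k) k = 0
  flank_mem : ∀ k, flank k (a k) ∈ T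

section

variable {T : Finset (Finset (ℤ × ℤ))} {lam : ℤ × ℤ → ℝ} {a : Fin 3 → ℤ × ℤ}

theorem IsDual.apex_mem_latticePts (h : IsDual T lam) (ha : IsApexFamily T a) (k : Fin 3) :
    a k ∈ latticePts :=
  h.subset_latticePts (ha.flank_mem k) (by simp [flank])

theorem IsDual.gap_apex_le (h : IsDual T lam) (ha : IsApexFamily T a) {k : Fin 3} {p : ℤ × ℤ}
    (hp : p ∈ latticePts) (hpk : bar3 p k = 0) : gap lam (a k) ≤ gap lam p := by
  obtain ⟨f, hf⟩ := h.exists_isSupport (ha.flank_mem k)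
  rw [hf.gap_eq hpk, hf.gap_eq (ha.bar3_eq_zero k), hf.eq (a k) (by simp [flank])]
  linarith [hf.le hp]

theorem IsDual.isArgmax_centralTriangle (h : IsDual T lam) (hT : centralTriangle ∈ T) :
    IsArgmax lam (dvtx lam (1, 1)) (downTri (1, 1)) := by
  obtain ⟨-, w, hw⟩ := (h.induces _).1 hT
  rw [centralTriangle_eq_downTri] at hw
  exact hw.eq_dvtx ▸ hw

theorem IsDual.edgeRay_central_eq_Icc (h : IsDual T lam) (ha : IsApexFamily T a) {k : Fin 3}
    {b c : ℤ × ℤ} (hb : b ∈ downTri (1, 1)) (hc : c ∈ downTri (1, 1)) (hbk : bar3 b k = 1)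
    (hck : bar3 c k = 1) :
    edgeRay lam b c (dvtx lam (1, 1)) k = Set.Icc 0 (gap lam (a k)) ∧ 0 ≤ gap lam (a k) := by
  have hw := h.isArgmax_centralTriangle ha.centralTriangle_mem
  have hb' := (hw.onDualEdge hb (by simp [downTri] : ((1, 1) : ℤ × ℤ) ∈ _)).1
  rw [gap_eq_sub, ← hb']
  refine ⟨edgeRay_eq_Icc (hw.onDualEdge hb hc) hbk hck (h.apex_mem_latticePts ha k)
    (ha.bar3_eq_zero k) fun p hp hpk => ?_, ?_⟩
  · have := h.gap_apex_le ha hp hpk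
    rw [gap_eq_sub, gap_eq_sub] at this
    linarith
  · exact sub_nonneg.2 ((hw.onDualEdge hb hc).2 _ (h.apex_mem_latticePts ha k))

theorem IsDual.satisfiesGenericityI_iff (h : IsDual T lam) (ha : IsApexFamily T a) :
    SatisfiesGenericityI lam ↔ ∃ k, ∀ l ≠ k, gap lam (a k) < gap lam (a l) := by
  have hw := h.isArgmax_centralTriangle ha.centralTriangle_mem
  obtain ⟨h₁, h₁'⟩ := h.edgeRay_central_eq_Icc ha (k := 0) (b := (1, 1)) (c := pE2 (1, 1))
    (by simp [downTri]) (by simp [downTri]) rfl rfl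
  obtain ⟨h₂, h₂'⟩ := h.edgeRay_central_eq_Icc ha (k := 1) (b := (1, 1)) (c := pE1 (1, 1))
    (by simp [downTri]) (by simp [downTri]) rfl rfl
  obtain ⟨h₃, h₃'⟩ := h.edgeRay_central_eq_Icc ha (k := 2) (b := pE1 (1, 1)) (c := pE2 (1, 1))
    (by simp [downTri]) (by simp [downTri]) rfl rfl
  rw [← edgeSet1_eq_edgeRay] at h₁
  rw [← edgeSet2_eq_edgeRay] at h₂
  rw [← edgeSet3_eq_edgeRay] at h₃
  have hvertex : HasCVertexAt lam (1, 1) :=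
    ⟨⟨_, hw⟩, h₁ ▸ bddAbove_Icc, h₂ ▸ bddAbove_Icc, h₃ ▸ bddAbove_Icc⟩
  have hgeneric : SatisfiesGenericityI lam ↔
      UniqueShortest (gap lam (a 0)) (gap lam (a 1)) (gap lam (a 2)) := by
    rw [← csSup_Icc h₁', ← csSup_Icc h₂', ← csSup_Icc h₃', ← h₁, ← h₂, ← h₃]
    exact ⟨fun hgen => hgen _ hvertex, fun hshort p hp => hp.eq_one_one ▸ hshort⟩
  simp [hgeneric, UniqueShortest, Fin.exists_fin_succ, Fin.forall_fin_succ]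

end

theorem satisfiesGenericityI_of_centralTriangle_notMem {T : Finset (Finset (ℤ × ℤ))}
    {lam : ℤ × ℤ → ℝ} (h : Induces lam T) (hT : centralTriangle ∉ T) :
    SatisfiesGenericityI lam := by
  intro p hp
  obtain rfl := hp.eq_one_one
  have hcard : 3 ≤ (downTri (1, 1)).card := by decide
  exact (hT (centralTriangle_eq_downTri ▸ (h _).2 ⟨hcard, hp.1⟩)).elim

-- The test points lie just outside the midpoints of the edges of the central triangle.
theorem exists_apex_of_coversPt_of_compatible : ∀ σ ∈ unimodularCells, ∀ k : Fin 3,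
    CoversPt 60 (![(59, 90), (90, 59), (91, 91)] k) σ → Compatible σ centralTriangle →
    ∃ q ∈ latticePts, bar3 q k = 0 ∧ σ = flank k q := by
  decide +kernel

theorem IsDual.exists_isApexFamily {T : Finset (Finset (ℤ × ℤ))} {lam : ℤ × ℤ → ℝ}
    (h : IsDual T lam) (hT : centralTriangle ∈ T) : ∃ a, IsApexFamily T a := by
  have hapex : ∀ k, ∃ q, bar3 q k = 0 ∧ flank k q ∈ T := by
    intro k
    obtain ⟨σ, hσ, hcovers⟩ :=
      h.exists_coversPt (N := 60) (X := ![(59, 90), (90, 59), (91, 91)] k) (by norm_num)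
        (by fin_cases k <;> simp) (by fin_cases k <;> simp) (by fin_cases k <;> simp)
    obtain ⟨q, -, hq, rfl⟩ := exists_apex_of_coversPt_of_compatible σ
      (h.mem_unimodularCells hσ) k hcovers (h.compatible hσ hT)
    exact ⟨q, hq, hσ⟩
  choose a ha hflank using hapex
  exact ⟨a, hT, ha, hflank⟩

/-! ### The action of `S₃` -/

theorem sum_bar3 (p : ℤ × ℤ) : ∑ k, bar3 p k = 4 := by
  simp [Fin.sum_univ_three, bar3]

theorem bar3_injective : Function.Injective bar3 := fun _ _ h =>
  Prod.ext (congrFun h 0) (congrFun h 1)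

theorem mem_latticePts {p : ℤ × ℤ} : p ∈ latticePts ↔ ∀ k, 0 ≤ bar3 p k := by
  refine ⟨bar3_nonneg, fun h => ?_⟩
  have h₀ : 0 ≤ p.1 := h 0
  have h₁ : 0 ≤ p.2 := h 1
  have h₂ : 0 ≤ 4 - p.1 - p.2 := h 2
  simp only [latticePts, mem_filter, mem_product, mem_Icc]
  omega

theorem bar3_actPt (π : Equiv.Perm (Fin 3)) (p : ℤ × ℤ) (k : Fin 3) :
    bar3 (actPt π p) k = bar3 p (π⁻¹ k) := by
  fin_cases k
  · rfl
  · rfl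
  · have hsum : ∑ k, bar3 p (π⁻¹ k) = 4 := (Equiv.sum_comp π⁻¹ (bar3 p)).trans (sum_bar3 p)
    rw [Fin.sum_univ_three] at hsum
    change 4 - bar3 p (π⁻¹ 0) - bar3 p (π⁻¹ 1) = bar3 p (π⁻¹ 2)
    linarith

theorem actPt_one (p : ℤ × ℤ) : actPt 1 p = p := bar3_injective <| by
  ext k; rw [bar3_actPt, inv_one, Equiv.Perm.one_apply]

theorem actPt_actPt (π ρ : Equiv.Perm (Fin 3)) (p : ℤ × ℤ) :
    actPt π (actPt ρ p) = actPt (π * ρ) p := bar3_injective <| by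
  ext k; rw [bar3_actPt, bar3_actPt, bar3_actPt, mul_inv_rev, Equiv.Perm.mul_apply]

theorem actPt_inv_actPt (π : Equiv.Perm (Fin 3)) (p : ℤ × ℤ) : actPt π⁻¹ (actPt π p) = p := by
  rw [actPt_actPt, inv_mul_cancel, actPt_one]

theorem actPt_actPt_inv (π : Equiv.Perm (Fin 3)) (p : ℤ × ℤ) : actPt π (actPt π⁻¹ p) = p := by
  rw [actPt_actPt, mul_inv_cancel, actPt_one]

theorem actPt_mem_latticePts {π : Equiv.Perm (Fin 3)} {p : ℤ × ℤ} :
    actPt π p ∈ latticePts ↔ p ∈ latticePts := by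
  simp only [mem_latticePts, bar3_actPt]
  exact π⁻¹.forall_congr_right (q := fun k => 0 ≤ bar3 p k)

theorem image_actPt_latticePts (π : Equiv.Perm (Fin 3)) :
    latticePts.image (actPt π) = latticePts := by
  ext p
  rw [mem_image]
  exact ⟨fun ⟨q, hq, hqp⟩ => hqp ▸ actPt_mem_latticePts.2 hq,
    fun hp => ⟨actPt π⁻¹ p, actPt_mem_latticePts.2 hp, actPt_actPt_inv π p⟩⟩

theorem actTri_one (T : Finset (Finset (ℤ × ℤ))) : actTri 1 T = T := by
  simp [actTri, funext actPt_one]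

theorem actTri_actTri (π ρ : Equiv.Perm (Fin 3)) (T : Finset (Finset (ℤ × ℤ))) :
    actTri π (actTri ρ T) = actTri (π * ρ) T := by
  simp only [actTri, image_image, Function.comp_def, actPt_actPt]

theorem actTri_inv_actTri (π : Equiv.Perm (Fin 3)) (T : Finset (Finset (ℤ × ℤ))) :
    actTri π⁻¹ (actTri π T) = T := by
  rw [actTri_actTri, inv_mul_cancel, actTri_one]

theorem ori_actPt (π : Equiv.Perm (Fin 3)) (a b c : ℤ × ℤ) :
    (ori (actPt π a) (actPt π b) (actPt π c)).natAbs = (ori a b c).natAbs := by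
  have hne : π⁻¹ 0 ≠ π⁻¹ 1 := π⁻¹.injective.ne (by decide)
  rw [Int.natAbs_eq_natAbs_iff]
  simp only [actPt, ori]
  generalize π⁻¹ 0 = i at *
  generalize π⁻¹ 1 = j at *
  fin_cases i <;> fin_cases j <;>
    first
    | exact absurd rfl hne
    | dsimp only [bar3, Fin.zero_eta, Fin.mk_one, Fin.reduceFinMk, Matrix.cons_val]
      first | (left; ring1) | (right; ring1)

theorem IsUnimodularTriangle.image_actPt {σ : Finset (ℤ × ℤ)} (h : IsUnimodularTriangle σ)
    (π : Equiv.Perm (Fin 3)) : IsUnimodularTriangle (σ.image (actPt π)) := by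
  obtain ⟨a, b, c, rfl, habc⟩ := h
  exact ⟨actPt π a, actPt π b, actPt π c, by simp [image_insert], (ori_actPt π a b c).trans habc⟩

/-- The extension of `bar3` to affine coordinates on the real plane. -/
def barForm : Fin 3 → ℝ × ℝ →ᵃ[ℝ] ℝ :=
  ![affineForm 1 0 0, affineForm 0 1 0, affineForm (-1) (-1) 4]

/-- The extension of `actPt π` to an affine map of the real plane. -/
def actR (π : Equiv.Perm (Fin 3)) : ℝ × ℝ →ᵃ[ℝ] ℝ × ℝ :=
  (barForm (π⁻¹ 0)).prod (barForm (π⁻¹ 1))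

theorem barForm_toR (k : Fin 3) (p : ℤ × ℤ) : barForm k (toR p) = bar3 p k := by
  fin_cases k <;> simp [barForm, affineForm_apply, bar3, toR]
  ring

theorem actR_toR (π : Equiv.Perm (Fin 3)) (p : ℤ × ℤ) : actR π (toR p) = toR (actPt π p) :=
  Prod.ext (barForm_toR _ p) (barForm_toR _ p)

theorem rhull_image_actPt (π : Equiv.Perm (Fin 3)) (σ : Finset (ℤ × ℤ)) :
    rhull (σ.image (actPt π)) = actR π '' rhull σ := by
  rw [rhull, rhull, AffineMap.image_convexHull, coe_image, Set.image_image, Set.image_image]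
  simp only [actR_toR]

theorem IsSupport.image_actPt {lam : ℤ × ℤ → ℝ} {f : ℝ × ℝ →ᵃ[ℝ] ℝ} {σ : Finset (ℤ × ℤ)}
    (h : IsSupport lam f σ) (π : Equiv.Perm (Fin 3)) :
    IsSupport (lam ∘ actPt π⁻¹) (f.comp (actR π⁻¹)) (σ.image (actPt π)) := by
  refine ⟨?_, ?_, fun p hp hpσ => ?_⟩
  · exact (image_subset_image h.subset).trans_eq (image_actPt_latticePts π)
  · refine forall_mem_image.2 fun p hp => ?_
    simpa [actR_toR, actPt_inv_actPt] using h.eq p hp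
  · simp only [AffineMap.comp_apply, actR_toR, Function.comp_apply]
    exact h.lt _ (actPt_mem_latticePts.2 hp) fun hmem =>
      hpσ (mem_image.2 ⟨_, hmem, actPt_actPt_inv π p⟩)

theorem IsDual.actTri {T : Finset (Finset (ℤ × ℤ))} {lam : ℤ × ℤ → ℝ} (h : IsDual T lam)
    (π : Equiv.Perm (Fin 3)) : IsDual (actTri π T) (lam ∘ actPt π⁻¹) := by
  refine isDual_of_forall_exists_isSupport ?_ ?_ ?_
  · exact forall_mem_image.2 fun σ hσ => (h.isUnimodularTriangle hσ).image_actPt π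
  · intro x hx
    rw [← image_actPt_latticePts π, rhull_image_actPt] at hx
    obtain ⟨y, hy, rfl⟩ := hx
    obtain ⟨σ, hσ, hyσ⟩ := h.exists_mem_rhull hy
    exact ⟨_, mem_image_of_mem _ hσ, rhull_image_actPt π σ ▸ Set.mem_image_of_mem _ hyσ⟩
  · refine forall_mem_image.2 fun σ hσ => ?_
    obtain ⟨f, hf⟩ := h.exists_isSupport hσ
    exact ⟨_, hf.image_actPt π⟩

theorem actPt_centralVertex (π : Equiv.Perm (Fin 3)) (k : Fin 3) :
    actPt π (centralVertex k) = centralVertex (π k) := by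
  decide +revert

theorem image_actPt_centralTriangle (π : Equiv.Perm (Fin 3)) :
    centralTriangle.image (actPt π) = centralTriangle := by
  decide +revert +kernel

theorem image_actPt_flank (π : Equiv.Perm (Fin 3)) (k : Fin 3) (q : ℤ × ℤ) :
    (flank k q).image (actPt π) = flank (π k) (actPt π q) := by
  have herase : (univ.erase k).image π = univ.erase (π k) := by
    rw [image_erase π.injective, image_univ_equiv]
  simp only [flank, image_insert, image_image, ← herase, Function.comp_def, actPt_centralVertex]

theorem gap_comp_actPt (lam : ℤ × ℤ → ℝ) (π : Equiv.Perm (Fin 3)) (p : ℤ × ℤ) :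
    gap (lam ∘ actPt π⁻¹) (actPt π p) = gap lam p := by
  simp only [gap, Function.comp_apply, bar3_actPt, actPt_inv_actPt, actPt_centralVertex]
  rw [Equiv.sum_comp π⁻¹ fun k => ((bar3 p k : ℝ) - 1) * lam (centralVertex k)]

theorem IsApexFamily.actTri {T : Finset (Finset (ℤ × ℤ))} {a : Fin 3 → ℤ × ℤ}
    (ha : IsApexFamily T a) (π : Equiv.Perm (Fin 3)) :
    IsApexFamily (actTri π T) fun k => actPt π (a (π⁻¹ k)) where
  centralTriangle_mem := mem_image.2
    ⟨_, ha.centralTriangle_mem, image_actPt_centralTriangle π⟩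
  bar3_eq_zero k := by rw [bar3_actPt, ha.bar3_eq_zero]
  flank_mem k := mem_image.2 ⟨_, ha.flank_mem (π⁻¹ k), by
    rw [image_actPt_flank, show π (π⁻¹ k) = k from π.apply_symm_apply k]⟩

theorem IsDual.satisfiesGenericityI_comp_actPt_iff {T : Finset (Finset (ℤ × ℤ))}
    {lam : ℤ × ℤ → ℝ} (h : IsDual T lam) {a : Fin 3 → ℤ × ℤ} (ha : IsApexFamily T a)
    (π : Equiv.Perm (Fin 3)) :
    SatisfiesGenericityI (lam ∘ actPt π⁻¹) ↔ SatisfiesGenericityI lam := by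
  rw [(h.actTri π).satisfiesGenericityI_iff (ha.actTri π), h.satisfiesGenericityI_iff ha]
  simp only [gap_comp_actPt]
  refine Equiv.exists_congr π⁻¹ fun k => ?_
  refine Equiv.forall_congr π⁻¹ fun l => ?_
  rw [π⁻¹.injective.ne_iff]

namespace NonGenericTriangulation

variable {T : Finset (Finset (ℤ × ℤ))}

theorem not_satisfiesGenericityI (h : NonGenericTriangulation T) {lam : ℤ × ℤ → ℝ}
    (hlam : IsDual T lam) : ¬SatisfiesGenericityI lam :=
  h.2 lam hlam.induces

theorem centralTriangle_mem (h : NonGenericTriangulation T) : centralTriangle ∈ T := by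
  obtain ⟨lam, hlam⟩ := h.1.2
  by_contra hT
  exact h.2 lam hlam (satisfiesGenericityI_of_centralTriangle_notMem hlam hT)

theorem exists_isApexFamily (h : NonGenericTriangulation T) : ∃ a, IsApexFamily T a := by
  obtain ⟨lam, hlam⟩ := isRegularUnimodularTriangulation_iff.1 h.1
  exact hlam.exists_isApexFamily h.centralTriangle_mem

theorem actTri (h : NonGenericTriangulation T) (π : Equiv.Perm (Fin 3)) :
    NonGenericTriangulation (actTri π T) := by
  obtain ⟨lam, hlam⟩ := isRegularUnimodularTriangulation_iff.1 h.1
  obtain ⟨a, ha⟩ := h.exists_isApexFamily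
  refine ⟨isRegularUnimodularTriangulation_iff.2 ⟨_, hlam.actTri π⟩, fun lam' hlam' hgeneric => ?_⟩
  have hdual : IsDual (_root_.actTri π T) lam' := ⟨(hlam.actTri π).triangulation, hlam'⟩
  refine h.not_satisfiesGenericityI (actTri_inv_actTri π T ▸ hdual.actTri π⁻¹) ?_
  exact (hdual.satisfiesGenericityI_comp_actPt_iff (ha.actTri π) π⁻¹).2 hgeneric

end NonGenericTriangulation

/-! ### Varying the lengths of the three edges -/

section

variable {T : Finset (Finset (ℤ × ℤ))} {lam : ℤ × ℤ → ℝ} {a : Fin 3 → ℤ × ℤ}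

theorem gap_add_smul (lam g : ℤ × ℤ → ℝ) (s : ℝ) (p : ℤ × ℤ) :
    gap (lam + s • g) p = gap lam p + s * gap g p := by
  simp only [gap, Pi.add_apply, Pi.smul_apply, smul_eq_mul, mul_add, sum_add_distrib, mul_sub,
    mul_sum, mul_left_comm s]
  ring

theorem one_le_bar3_centralVertex (j k : Fin 3) : 1 ≤ bar3 (centralVertex j) k := by
  decide +revert

theorem gap_single_of_bar3_eq_zero {q : ℤ × ℤ} {k : Fin 3} (hq : bar3 q k = 0) (p : ℤ × ℤ) :
    gap (Pi.single q 1) p = if p = q then -1 else 0 := by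
  have hne : ∀ j, centralVertex j ≠ q := by
    rintro j rfl
    have := one_le_bar3_centralVertex j k
    omega
  by_cases hpq : p = q <;> simp [gap, hne, hpq]

theorem IsDual.exists_generic_of_injective (h : IsDual T lam) (ha : IsApexFamily T a)
    (hinj : Function.Injective a) : ∃ lam', IsDual T lam' ∧ SatisfiesGenericityI lam' := by
  obtain ⟨k, hk⟩ := Finite.exists_min fun k => gap lam (a k)
  obtain ⟨ε, hε, hdual⟩ := h.exists_pos_add_smul (Pi.single (a k) 1)
  refine ⟨_, hdual, (hdual.satisfiesGenericityI_iff ha).2 ⟨k, fun l hl => ?_⟩⟩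
  rw [gap_add_smul, gap_add_smul, gap_single_of_bar3_eq_zero (ha.bar3_eq_zero k),
    gap_single_of_bar3_eq_zero (ha.bar3_eq_zero k), if_pos rfl, if_neg (hinj.ne hl)]
  linarith [hk l]

theorem IsDual.exists_generic_of_gap_lt (h : IsDual T lam) (ha : IsApexFamily T a)
    {g : ℤ × ℤ → ℝ} (hg : ∀ σ ∈ T, ∃ v : ℝ × ℝ →ᵃ[ℝ] ℝ,
      (∀ p ∈ σ, v (toR p) = g p) ∧ ∀ p ∈ latticePts, g p ≤ v (toR p))
    {k : Fin 3} (hk : ∀ l ≠ k, gap g (a k) < gap g (a l)) :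
    ∃ lam', IsDual T lam' ∧ SatisfiesGenericityI lam' := by
  have hlarge : ∀ l, ∀ᶠ s : ℝ in Filter.atTop,
      l ≠ k → gap lam (a k) - gap lam (a l) < s * (gap g (a l) - gap g (a k)) := by
    intro l
    by_cases hl : l = k
    · exact .of_forall fun _ hn => (hn hl).elim
    · exact ((Filter.tendsto_id.atTop_mul_const (sub_pos.2 (hk l hl))).eventually_gt_atTop _).mono
        fun _ hs _ => hs
  obtain ⟨s, hs, hs0⟩ :=
    ((Filter.eventually_all.2 hlarge).and (Filter.eventually_ge_atTop 0)).exists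
  have hdual := h.add_smul_of_le hg hs0
  refine ⟨_, hdual, (hdual.satisfiesGenericityI_iff ha).2 ⟨k, fun l hl => ?_⟩⟩
  rw [gap_add_smul, gap_add_smul]
  linarith [hs l hl]

end

/-! ### Concave functions folded along edges of the triangulation -/

/-- The concave piecewise linear function `p ↦ min {ori a b p | (a, b) ∈ F}`; the minimum of the
empty family is `0`. -/
def minForm (F : Finset ((ℤ × ℤ) × (ℤ × ℤ))) (p : ℤ × ℤ) : ℤ :=
  if hF : F.Nonempty then F.inf' hF fun e => ori e.1 e.2 p else 0

theorem minForm_eq_of_forall_le {F : Finset ((ℤ × ℤ) × (ℤ × ℤ))} {e : (ℤ × ℤ) × (ℤ × ℤ)}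
    (he : e ∈ F) {p : ℤ × ℤ} (hmin : ∀ e' ∈ F, ori e.1 e.2 p ≤ ori e'.1 e'.2 p) :
    minForm F p = ori e.1 e.2 p := by
  rw [minForm, dif_pos ⟨e, he⟩]
  exact le_antisymm (inf'_le _ he) (le_inf' _ _ hmin)

theorem minForm_le {F : Finset ((ℤ × ℤ) × (ℤ × ℤ))} {e : (ℤ × ℤ) × (ℤ × ℤ)} (he : e ∈ F)
    (p : ℤ × ℤ) : minForm F p ≤ ori e.1 e.2 p := by
  rw [minForm, dif_pos ⟨e, he⟩]
  exact inf'_le _ he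

/-- On the cell `σ` the minimum defining `minForm F` is attained by a single form, that is,
`minForm F` does not bend inside `σ`. -/
def IsLinearOn (F : Finset ((ℤ × ℤ) × (ℤ × ℤ))) (σ : Finset (ℤ × ℤ)) : Prop :=
  ∃ e ∈ F, ∀ e' ∈ F, ∀ p ∈ σ, ori e.1 e.2 p ≤ ori e'.1 e'.2 p

instance (F : Finset ((ℤ × ℤ) × (ℤ × ℤ))) (σ : Finset (ℤ × ℤ)) : Decidable (IsLinearOn F σ) := by
  unfold IsLinearOn; infer_instance

theorem IsLinearOn.exists_affineMap {F : Finset ((ℤ × ℤ) × (ℤ × ℤ))} {σ : Finset (ℤ × ℤ)}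
    (h : IsLinearOn F σ) : ∃ v : ℝ × ℝ →ᵃ[ℝ] ℝ,
      (∀ p ∈ σ, v (toR p) = minForm F p) ∧ ∀ p, (minForm F p : ℝ) ≤ v (toR p) := by
  obtain ⟨e, he, hmin⟩ := h
  refine ⟨edgeForm e.1 e.2, fun p hp => ?_, fun p => ?_⟩ <;> rw [edgeForm_toR]
  · rw [minForm_eq_of_forall_le he fun e' he' => hmin e' he' p hp]
  · exact_mod_cast minForm_le he p

theorem gap_intCast_comp_minForm (F : Finset ((ℤ × ℤ) × (ℤ × ℤ))) (p : ℤ × ℤ) :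
    gap (fun q => (minForm F q : ℝ)) p =
      ((∑ k, (bar3 p k - 1) * minForm F (centralVertex k) - minForm F p : ℤ) : ℝ) := by
  simp [gap]

/-- The forms defining the function that shortens the edge of the curve dual to the edge
`(1,2)(2,1)` when the opposite apex is `(m, 4 - m)` and the other two apexes coincide at `(0,0)`.
It vanishes on the central triangle and at `(m, 4 - m)`, and it bends along the broken line
`P, (1,2), (1,1), (2,1), Q`, and also along the edges from `(m, 4 - m)` to `(1,2)` and `(2,1)` when
`P = (0,3)` and `Q = (3,0)` respectively. -/
def foldForms (m : ℤ) (P Q : ℤ × ℤ) : Finset ((ℤ × ℤ) × (ℤ × ℤ)) :=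
  {((1, 1), (1, 1)), ((1, 2), (1, 1)), ((1, 1), (2, 1)),
    (if P = (1, 3) then (1, 3) else (m, 4 - m), (1, 2)),
    ((2, 1), if Q = (3, 1) then (3, 1) else (m, 4 - m))}

-- The test point lies close to `(1,2)`, just beyond the central triangle and its neighbours.
theorem exists_pendant_edge_left : ∀ σ ∈ unimodularCells, CoversPt 60 (59, 123) σ →
    Compatible σ (flank 0 (0, 0)) →
    ∀ m ∈ ({1, 2, 3} : Finset ℤ), Compatible σ (flank 2 (m, 4 - m)) →
    ∃ P ∈ ({(0, 3), (1, 3)} : Finset (ℤ × ℤ)), {(1, 2), P} ⊆ σ := by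
  decide +kernel

theorem exists_pendant_edge_right : ∀ σ ∈ unimodularCells, CoversPt 60 (123, 59) σ →
    Compatible σ (flank 1 (0, 0)) →
    ∀ m ∈ ({1, 2, 3} : Finset ℤ), Compatible σ (flank 2 (m, 4 - m)) →
    ∃ Q ∈ ({(3, 0), (3, 1)} : Finset (ℤ × ℤ)), {(2, 1), Q} ⊆ σ := by
  decide +kernel

theorem isLinearOn_foldForms : ∀ σ ∈ unimodularCells,
    Compatible σ (flank 0 (0, 0)) → Compatible σ (flank 1 (0, 0)) →
    ∀ m ∈ ({1, 2, 3} : Finset ℤ), Compatible σ (flank 2 (m, 4 - m)) →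
    ∀ P ∈ ({(0, 3), (1, 3)} : Finset (ℤ × ℤ)), Compatible σ {(1, 2), P} →
    ∀ Q ∈ ({(3, 0), (3, 1)} : Finset (ℤ × ℤ)), Compatible σ {(2, 1), Q} →
    IsLinearOn (foldForms m P Q) σ := by
  decide +kernel

theorem sum_minForm_foldForms : ∀ m ∈ ({1, 2, 3} : Finset ℤ),
    ∀ P ∈ ({(0, 3), (1, 3)} : Finset (ℤ × ℤ)), ∀ Q ∈ ({(3, 0), (3, 1)} : Finset (ℤ × ℤ)),
    ∑ k, (bar3 (m, 4 - m) k - 1) * minForm (foldForms m P Q) (centralVertex k) -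
        minForm (foldForms m P Q) (m, 4 - m) = 0 ∧
      ∑ k, (bar3 (0, 0) k - 1) * minForm (foldForms m P Q) (centralVertex k) -
        minForm (foldForms m P Q) (0, 0) = 1 := by
  decide +kernel

theorem gap_minForm_foldForms {m : ℤ} (hm : m ∈ ({1, 2, 3} : Finset ℤ)) {P Q : ℤ × ℤ}
    (hP : P ∈ ({(0, 3), (1, 3)} : Finset (ℤ × ℤ))) (hQ : Q ∈ ({(3, 0), (3, 1)} : Finset (ℤ × ℤ))) :
    gap (fun p => (minForm (foldForms m P Q) p : ℝ)) (m, 4 - m) = 0 ∧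
      gap (fun p => (minForm (foldForms m P Q) p : ℝ)) (0, 0) = 1 := by
  rw [gap_intCast_comp_minForm, gap_intCast_comp_minForm]
  exact_mod_cast sum_minForm_foldForms m hm P hP Q hQ

theorem IsDual.exists_generic_of_apex {T : Finset (Finset (ℤ × ℤ))} {lam : ℤ × ℤ → ℝ}
    {a : Fin 3 → ℤ × ℤ} (h : IsDual T lam) (ha : IsApexFamily T a) (h₀ : a 0 = (0, 0))
    (h₁ : a 1 = (0, 0)) {m : ℤ} (hm : m ∈ ({1, 2, 3} : Finset ℤ)) (h₂ : a 2 = (m, 4 - m)) :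
    ∃ lam', IsDual T lam' ∧ SatisfiesGenericityI lam' := by
  have hflank₀ := h₀ ▸ ha.flank_mem 0
  have hflank₁ := h₁ ▸ ha.flank_mem 1
  have hflank₂ := h₂ ▸ ha.flank_mem 2
  obtain ⟨σP, hσP, hcoversP⟩ := h.exists_coversPt (N := 60) (X := (59, 123))
    (by norm_num) (by norm_num) (by norm_num) (by norm_num)
  obtain ⟨σQ, hσQ, hcoversQ⟩ := h.exists_coversPt (N := 60) (X := (123, 59))
    (by norm_num) (by norm_num) (by norm_num) (by norm_num)
  obtain ⟨P, hP, hPσ⟩ := exists_pendant_edge_left σP (h.mem_unimodularCells hσP) hcoversP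
    (h.compatible hσP hflank₀) m hm (h.compatible hσP hflank₂)
  obtain ⟨Q, hQ, hQσ⟩ := exists_pendant_edge_right σQ (h.mem_unimodularCells hσQ) hcoversQ
    (h.compatible hσQ hflank₁) m hm (h.compatible hσQ hflank₂)
  obtain ⟨hgap₂, hgap₀⟩ := gap_minForm_foldForms hm hP hQ
  refine h.exists_generic_of_gap_lt ha (g := fun p => minForm (foldForms m P Q) p) (k := 2) ?_ ?_
  · intro σ hσ
    have hlinear := isLinearOn_foldForms σ (h.mem_unimodularCells hσ)
      (h.compatible hσ hflank₀) (h.compatible hσ hflank₁) m hm (h.compatible hσ hflank₂)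
      P hP ((h.compatible hσ hσP).mono subset_rfl hPσ)
      Q hQ ((h.compatible hσ hσQ).mono subset_rfl hQσ)
    obtain ⟨v, hv, hle⟩ := hlinear.exists_affineMap
    exact ⟨v, hv, fun p _ => hle p⟩
  · simp [Fin.forall_fin_succ, h₀, h₁, h₂, hgap₂, hgap₀]

/-! ### The motif of the non-generic triangulations -/

/-- The common partial subdivision: the central triangle, two of whose neighbours have their apex
at the same corner `(0,0)`, while the third one has its apex at another corner. -/
def motif : Finset (Finset (ℤ × ℤ)) :=
  {centralTriangle, flank 0 (0, 0), flank 1 (0, 0), flank 2 (4, 0)}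

theorem motif_subset_iff {T : Finset (Finset (ℤ × ℤ))} :
    motif ⊆ T ↔ IsApexFamily T ![(0, 0), (0, 0), (4, 0)] := by
  simp only [motif, insert_subset_iff, singleton_subset_iff]
  refine ⟨fun ⟨hc, h₀, h₁, h₂⟩ => ⟨hc, by decide, ?_⟩, fun h =>
    ⟨h.centralTriangle_mem, h.flank_mem 0, h.flank_mem 1, h.flank_mem 2⟩⟩
  simpa [Fin.forall_fin_succ] using ⟨h₀, h₁, h₂⟩

theorem IsDual.not_satisfiesGenericityI_of_motif_subset {T : Finset (Finset (ℤ × ℤ))}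
    {lam : ℤ × ℤ → ℝ} (h : IsDual T lam) (hT : motif ⊆ T) : ¬SatisfiesGenericityI lam := by
  have ha := motif_subset_iff.1 hT
  have hle : gap lam (0, 0) ≤ gap lam (4, 0) :=
    h.gap_apex_le ha (k := 1) (p := (4, 0)) (by decide) rfl
  rw [h.satisfiesGenericityI_iff ha]
  simp [Fin.exists_fin_succ, Fin.forall_fin_succ, hle]

theorem nonGenericTriangulation_of_motif_subset {T : Finset (Finset (ℤ × ℤ))}
    (h : IsRegularUnimodularTriangulation T) (hT : motif ⊆ T) : NonGenericTriangulation T :=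
  ⟨h, fun _ hlam => IsDual.not_satisfiesGenericityI_of_motif_subset ⟨h.1, hlam⟩ hT⟩

namespace NonGenericTriangulation

variable {T : Finset (Finset (ℤ × ℤ))} {a : Fin 3 → ℤ × ℤ}

theorem not_injective (h : NonGenericTriangulation T) (ha : IsApexFamily T a) :
    ¬Function.Injective a := by
  intro hinj
  obtain ⟨lam, hlam⟩ := isRegularUnimodularTriangulation_iff.1 h.1
  obtain ⟨lam', hlam', hgeneric⟩ := hlam.exists_generic_of_injective ha hinj
  exact h.not_satisfiesGenericityI hlam' hgeneric

theorem apex_eq_corner (h : NonGenericTriangulation T) (ha : IsApexFamily T a)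
    (h₀ : a 0 = (0, 0)) (h₁ : a 1 = (0, 0)) : a 2 = (4, 0) ∨ a 2 = (0, 4) := by
  obtain ⟨lam, hlam⟩ := isRegularUnimodularTriangulation_iff.1 h.1
  have hmem := mem_latticePts.1 (hlam.apex_mem_latticePts ha 2)
  have hfst : 0 ≤ (a 2).1 := hmem 0
  have hsnd : 0 ≤ (a 2).2 := hmem 1
  have hthird : 4 - (a 2).1 - (a 2).2 = 0 := ha.bar3_eq_zero 2
  by_contra! hne
  obtain ⟨lam', hlam', hgeneric⟩ := hlam.exists_generic_of_apex ha h₀ h₁ (m := (a 2).1)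
    (by grind) (Prod.ext rfl (by simp only; omega))
  exact h.not_satisfiesGenericityI hlam' hgeneric

theorem exists_actTri_apex_eq (h : NonGenericTriangulation T) : ∃ (π : Equiv.Perm (Fin 3)) (a : _),
    IsApexFamily (_root_.actTri π T) a ∧ a 0 = (0, 0) ∧ a 1 = (0, 0) := by
  obtain ⟨a, ha⟩ := h.exists_isApexFamily
  obtain ⟨i, j, hij, hne⟩ := Function.not_injective_iff.1 (h.not_injective ha)
  have htransitive : ∀ i j : Fin 3, i ≠ j → ∃ π : Equiv.Perm (Fin 3), i = π⁻¹ 0 ∧ j = π⁻¹ 1 := by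
    decide
  obtain ⟨π, rfl, rfl⟩ := htransitive i j hne
  have ha' := ha.actTri π
  have hfst := ha'.bar3_eq_zero 0
  have hsnd := ha'.bar3_eq_zero 1
  rw [← hij] at hsnd
  have hzero : actPt π (a (π⁻¹ 0)) = (0, 0) := Prod.ext hfst hsnd
  exact ⟨π, _, ha', hzero, hij ▸ hzero⟩

theorem exists_motif_subset_actTri (h : NonGenericTriangulation T) :
    ∃ π, motif ⊆ _root_.actTri π T := by
  obtain ⟨π, a, ha, h₀, h₁⟩ := h.exists_actTri_apex_eq
  rcases (h.actTri π).apex_eq_corner ha h₀ h₁ with h₂ | h₂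
  · refine ⟨π, motif_subset_iff.2 ?_⟩
    convert ha using 1
    ext k : 1
    fin_cases k <;> simp [h₀, h₁, h₂]
  · refine ⟨Equiv.swap 0 1 * π, ?_⟩
    rw [← actTri_actTri, motif_subset_iff]
    convert ha.actTri (Equiv.swap 0 1) using 1
    ext k : 1
    have hfix : (Equiv.swap 0 1 : Equiv.Perm (Fin 3)) 2 = 2 := by decide
    fin_cases k <;> simp [h₀, h₁, h₂, hfix, actPt, bar3]

end NonGenericTriangulation

theorem nonGenericTriangulation_iff_exists_motif_subset {T : Finset (Finset (ℤ × ℤ))}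
    (h : IsRegularUnimodularTriangulation T) :
    NonGenericTriangulation T ↔ ∃ π, motif ⊆ actTri π T := by
  refine ⟨fun hT => hT.exists_motif_subset_actTri, fun ⟨π, hπ⟩ => ?_⟩
  obtain ⟨lam, hlam⟩ := isRegularUnimodularTriangulation_iff.1 h
  have hnongeneric := nonGenericTriangulation_of_motif_subset
    (isRegularUnimodularTriangulation_iff.2 ⟨_, hlam.actTri π⟩) hπ
  exact actTri_inv_actTri π T ▸ hnongeneric.actTri π⁻¹

/-! ### Certifying regular triangulations by integer heights -/

section Certificates

variable {T : Finset (Finset (ℤ × ℤ))}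

/-- Every edge of a cell of `T` lies on the boundary of `4Δ₂` or belongs to a second cell of `T`,
on its other side. -/
def HasNeighbors (T : Finset (Finset (ℤ × ℤ))) : Prop :=
  ∀ σ ∈ T, ∀ a ∈ σ, ∀ b ∈ σ, ∀ c ∈ σ, ori a b c = 1 →
    (∀ p ∈ latticePts, 0 ≤ ori a b p) ∨ ∃ τ ∈ T, a ∈ τ ∧ b ∈ τ ∧ ∃ d ∈ τ, ori b a d = 1

instance : Decidable (HasNeighbors T) := by unfold HasNeighbors; infer_instance

theorem IsSupport.edgeForm_nonneg_of_le {lam : ℤ × ℤ → ℝ} {f g : ℝ × ℝ →ᵃ[ℝ] ℝ}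
    {a b c d : ℤ × ℤ} {τ : Finset (ℤ × ℤ)} {x : ℝ × ℝ} (hf : IsSupport lam f {a, b, c})
    (hg : IsSupport lam g τ) (hc : 0 ≤ ori a b c) (ha : a ∈ τ) (hb : b ∈ τ) (hd : d ∈ τ)
    (hbad : ori b a d = 1) (hle : f x ≤ g x) : 0 ≤ edgeForm a b x := by
  have hdσ : d ∉ ({a, b, c} : Finset (ℤ × ℤ)) := by
    simp only [ori] at hbad hc
    grind
  have hlt := hf.lt d (hg.subset hd) hdσ
  have hfg := ori_mul_affineMap (g - f) b a d x
  simp only [hbad, AffineMap.coe_sub, Pi.sub_apply, hg.eq _ ha, hg.eq _ hb, hg.eq _ hd,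
    hf.eq a (by simp), hf.eq b (by simp), edgeForm_swap a b] at hfg
  refine nonneg_of_mul_nonneg_left (b := f (toR d) - lam d) ?_ (sub_pos.2 hlt)
  push_cast at hfg
  linarith

-- The cell containing `x` is the one whose supporting function has the smallest value at `x`.
theorem exists_mem_rhull_of_hasNeighbors {lam : ℤ × ℤ → ℝ} (hnonempty : T.Nonempty)
    (hunimodular : ∀ σ ∈ T, IsUnimodularTriangle σ) (hsupport : ∀ σ ∈ T, ∃ f, IsSupport lam f σ)
    (hneighbors : HasNeighbors T) {x : ℝ × ℝ} (hx : x ∈ rhull latticePts) :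
    ∃ σ ∈ T, x ∈ rhull σ := by
  choose! f hf using hsupport
  obtain ⟨σ, hσ, hmin⟩ := T.exists_min_image (fun σ => f σ x) hnonempty
  refine ⟨σ, hσ, ?_⟩
  have hedge : ∀ a b c : ℤ × ℤ, ori a b c = 1 → σ = {a, b, c} → 0 ≤ edgeForm a b x := by
    rintro a b c habc rfl
    rcases hneighbors _ hσ a (by simp) b (by simp) c (by simp) habc with
      hboundary | ⟨τ, hτ, ha, hb, d, hd, hbad⟩
    · exact affineMap_nonneg_of_mem_rhull
        (fun p hp => by rw [edgeForm_toR]; exact_mod_cast hboundary p hp) hx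
    · exact (hf _ hσ).edgeForm_nonneg_of_le (hf τ hτ) (habc ▸ zero_le_one) ha hb hd hbad
        (hmin τ hτ)
  obtain ⟨a, b, c, habc, rfl⟩ := (hunimodular σ hσ).exists_ori_eq_one
  refine (mem_rhull_triple (habc ▸ one_pos)).2 ⟨hedge b c a ?_ ?_, hedge c a b ?_ ?_,
    hedge a b c habc rfl⟩ <;> first | (simp only [ori_rotate, habc]) | grind

/-- The affine function interpolating the integer heights `h` at the unimodular triangle `σ` lies
strictly above `h` at all other lattice points of `4Δ₂`. -/
def SupportsAt (h : ℤ × ℤ → ℤ) (σ : Finset (ℤ × ℤ)) : Prop :=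
  σ ⊆ latticePts ∧ ∃ a ∈ σ, ∃ b ∈ σ, ∃ c ∈ σ, ori a b c = 1 ∧ σ = {a, b, c} ∧
    ∀ p ∈ latticePts, p ∉ σ → h p < h a * ori b c p + h b * ori c a p + h c * ori a b p

instance (h : ℤ × ℤ → ℤ) (σ : Finset (ℤ × ℤ)) : Decidable (SupportsAt h σ) := by
  unfold SupportsAt; infer_instance

theorem SupportsAt.isUnimodularTriangle {h : ℤ × ℤ → ℤ} {σ : Finset (ℤ × ℤ)}
    (hσ : SupportsAt h σ) : IsUnimodularTriangle σ := by
  obtain ⟨-, a, -, b, -, c, -, habc, rfl, -⟩ := hσ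
  exact isUnimodularTriangle_of_ori_eq_one habc

theorem SupportsAt.exists_isSupport {h : ℤ × ℤ → ℤ} {σ : Finset (ℤ × ℤ)}
    (hσ : SupportsAt h σ) : ∃ f, IsSupport (fun p => h p) f σ := by
  obtain ⟨hsub, a, -, b, -, c, -, habc, rfl, hlt⟩ := hσ
  refine ⟨interpolation (fun p => h p) a b c, hsub, interpolation_eq_of_mem habc _, ?_⟩
  intro p hp hpσ
  rw [interpolation_toR]
  exact_mod_cast hlt p hp hpσ

theorem isDual_of_supportsAt_of_hasNeighbors {h : ℤ × ℤ → ℤ} (hnonempty : T.Nonempty)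
    (hsupports : ∀ σ ∈ T, SupportsAt h σ) (hneighbors : HasNeighbors T) :
    IsDual T fun p => h p := by
  have hunimodular := fun σ hσ => (hsupports σ hσ).isUnimodularTriangle
  have hsupport := fun σ hσ => (hsupports σ hσ).exists_isSupport
  exact isDual_of_forall_exists_isSupport hunimodular
    (fun _ => exists_mem_rhull_of_hasNeighbors hnonempty hunimodular hsupport hneighbors) hsupport

end Certificates

theorem IsDual.eq_of_subset {T T' : Finset (Finset (ℤ × ℤ))} {lam lam' : ℤ × ℤ → ℝ}
    (h : IsDual T lam) (h' : IsDual T' lam') (hsub : T ⊆ T') : T = T' :=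
  (h.of_forall_exists_isSupport fun _ hσ => h'.exists_isSupport (hsub hσ)).induces.unique h'.induces

/-! ### The refinements of the motif -/

/-- The triangles spanned by `o` and the segments of the lattice path `l`. -/
def fan (o : ℤ × ℤ) (l : List (ℤ × ℤ)) : Finset (Finset (ℤ × ℤ)) :=
  ((l.zip l.tail).map fun e => {o, e.1, e.2}).toFinset

/-- The lattice points on the bottom edge of `4Δ₂`. -/
def bottomEdge : List (ℤ × ℤ) := [(0, 0), (1, 0), (2, 0), (3, 0), (4, 0)]

/-- The lattice points on the other two edges of `4Δ₂`, from `(0,0)` through `(0,4)` to `(4,0)`. -/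
def rim : List (ℤ × ℤ) :=
  [(0, 0), (0, 1), (0, 2), (0, 3), (0, 4), (1, 3), (2, 2), (3, 1), (4, 0)]

/-- The refinement of the motif in which the fan of `(1,2)` over the rim is cut short by the chord
from the `i`-th to the `j`-th point of the rim. The pocket behind the chord is itself a fan, with
apex at an end of the chord: at `(0,3)` if `i = 3`, and at `(1,3)` otherwise. -/
def chordRefinement (chord : ℕ × ℕ) : Finset (Finset (ℤ × ℤ)) :=
  let apex : ℤ × ℤ := if chord.1 = 3 then (0, 3) else (1, 3)
  motif ∪ fan (2, 1) bottomEdge ∪ fan (1, 2) (rim.take (chord.1 + 1) ++ rim.drop chord.2) ∪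
    fan apex (((rim.take (chord.2 + 1)).drop chord.1).erase apex)

/-- The chords that occur; the first one is an edge of the rim, so its pocket is empty. -/
def chords : Finset (ℕ × ℕ) :=
  {(3, 4), (3, 5), (3, 6), (3, 7), (3, 8), (2, 5), (1, 5), (0, 5)}

/-- The non-generic triangulations, one from each orbit of `S₃`. -/
def representatives : Finset (Finset (Finset (ℤ × ℤ))) := chords.image chordRefinement

theorem card_representatives : representatives.card = 8 := by
  decide +kernel

theorem motif_subset_of_mem_representatives {T : Finset (Finset (ℤ × ℤ))}
    (hT : T ∈ representatives) : motif ⊆ T := by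
  obtain ⟨chord, -, rfl⟩ := mem_image.1 hT
  rw [chordRefinement, union_assoc, union_assoc]
  exact subset_union_left

/-- Coefficient vectors inducing the triangulations `chordRefinement`, listed as
`[[h (0,0), …, h (0,4)], …, [h (4,0)]]`; the values outside `chords` are irrelevant. -/
def chordHeights : ℕ × ℕ → List (List ℤ)
  | (3, 4) => [[-1, -2, -4, -7, -25], [-2, 0, 0, -21], [-4, 0, -18], [-7, -16], [-15]]
  | (3, 5) => [[-2, -3, -5, -8, -28], [-3, 0, 0, -19], [-5, 0, -16], [-8, -14], [-13]]
  | (3, 6) => [[-1, -2, -4, -7, -31], [-2, 0, 0, -22], [-4, 0, -14], [-7, -12], [-11]]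
  | (3, 7) => [[-1, -2, -4, -7, -39], [-2, 0, 0, -29], [-4, 0, -20], [-7, -12], [-11]]
  | (3, 8) => [[-1, -2, -4, -7, -56], [-2, 0, 0, -44], [-4, 0, -33], [-7, -23], [-14]]
  | (2, 5) => [[-1, -2, -4, -22, -41], [-2, 0, 0, -17], [-4, 0, -14], [-7, -12], [-11]]
  | (1, 5) => [[-1, -2, -20, -39, -59], [-2, 0, 0, -17], [-4, 0, -14], [-7, -12], [-11]]
  | _ => [[-1, -19, -38, -58, -79], [-2, 0, 0, -17], [-4, 0, -14], [-7, -12], [-11]]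

theorem supportsAt_chordHeights : ∀ chord ∈ chords, ∀ σ ∈ chordRefinement chord,
    SupportsAt (fun p => ((chordHeights chord).getD p.1.toNat []).getD p.2.toNat 0) σ := by
  decide +kernel

theorem hasNeighbors_chordRefinement : ∀ chord ∈ chords, HasNeighbors (chordRefinement chord) := by
  decide +kernel

theorem isRegularUnimodularTriangulation_of_mem_representatives {T : Finset (Finset (ℤ × ℤ))}
    (hT : T ∈ representatives) : IsRegularUnimodularTriangulation T := by
  have hnonempty : T.Nonempty :=
    ⟨_, motif_subset_of_mem_representatives hT (mem_insert_self _ _)⟩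
  obtain ⟨chord, hchord, rfl⟩ := mem_image.1 hT
  exact isRegularUnimodularTriangulation_iff.2 ⟨_, isDual_of_supportsAt_of_hasNeighbors hnonempty
    (supportsAt_chordHeights chord hchord) (hasNeighbors_chordRefinement chord hchord)⟩

/-- The cells that occur in the refinements of the motif. -/
def refinementCells : Finset (Finset (ℤ × ℤ)) := chords.biUnion chordRefinement

theorem mem_refinementCells_of_compatible : ∀ σ ∈ unimodularCells,
    (∀ τ ∈ motif, Compatible σ τ) → σ ∈ refinementCells := by
  decide +kernel

-- The cells at these two points determine the chord.
theorem exists_chord_of_coversPt : ∀ σ ∈ refinementCells, CoversPt 60 (110, 90) σ →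
    ∀ τ ∈ refinementCells, CoversPt 60 (50, 140) τ → Compatible σ τ →
    ∃ chord ∈ chords, ∀ υ ∈ refinementCells, Compatible υ σ → Compatible υ τ →
      υ ∈ chordRefinement chord := by
  decide +kernel

theorem IsDual.mem_representatives {T : Finset (Finset (ℤ × ℤ))} {lam : ℤ × ℤ → ℝ}
    (h : IsDual T lam) (hT : motif ⊆ T) : T ∈ representatives := by
  have hcells : ∀ σ ∈ T, σ ∈ refinementCells := fun σ hσ =>
    mem_refinementCells_of_compatible σ (h.mem_unimodularCells hσ)
      fun τ hτ => h.compatible hσ (hT hτ)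
  obtain ⟨σ, hσ, hcovers⟩ := h.exists_coversPt (N := 60) (X := (110, 90))
    (by norm_num) (by norm_num) (by norm_num) (by norm_num)
  obtain ⟨τ, hτ, hcovers'⟩ := h.exists_coversPt (N := 60) (X := (50, 140))
    (by norm_num) (by norm_num) (by norm_num) (by norm_num)
  obtain ⟨chord, hchord, hsub⟩ := exists_chord_of_coversPt σ (hcells σ hσ) hcovers
    τ (hcells τ hτ) hcovers' (h.compatible hσ hτ)
  have hrep : chordRefinement chord ∈ representatives := mem_image_of_mem _ hchord
  obtain ⟨lam', h'⟩ := isRegularUnimodularTriangulation_iff.1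
    (isRegularUnimodularTriangulation_of_mem_representatives hrep)
  rw [h.eq_of_subset h' fun υ hυ =>
    hsub υ (hcells υ hυ) (h.compatible hυ hσ) (h.compatible hυ hτ)]
  exact hrep

theorem isPartialSubdivision_motif : IsPartialSubdivision motif := by
  have hrep : chordRefinement (3, 4) ∈ representatives := mem_image_of_mem _ (by decide)
  obtain ⟨hcells, -, hinter⟩ := (isRegularUnimodularTriangulation_of_mem_representatives hrep).1
  have hsub := motif_subset_of_mem_representatives hrep
  refine ⟨fun σ hσ => ⟨(hcells σ (hsub hσ)).1, ?_⟩,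
    fun σ hσ τ hτ => hinter σ (hsub hσ) τ (hsub hτ)⟩
  exact card_pos.1 ((hcells σ (hsub hσ)).2.card_eq_three ▸ three_pos)

theorem isUnimodularTriangle_of_mem_motif {σ : Finset (ℤ × ℤ)} (hσ : σ ∈ motif) :
    IsUnimodularTriangle σ := by
  have hrep : chordRefinement (3, 4) ∈ representatives := mem_image_of_mem _ (by decide)
  exact ((isRegularUnimodularTriangulation_of_mem_representatives hrep).1.1 σ
    (motif_subset_of_mem_representatives hrep hσ)).2

theorem exists_not_compatible_image_actPt : ∀ π : Equiv.Perm (Fin 3), π ≠ 1 →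
    ∃ σ ∈ motif, ∃ τ ∈ motif, ¬Compatible (σ.image (actPt π)) τ := by
  decide +kernel

theorem IsDual.eq_of_motif_subset_actTri {T : Finset (Finset (ℤ × ℤ))} {lam : ℤ × ℤ → ℝ}
    (h : IsDual T lam) {π ρ : Equiv.Perm (Fin 3)} (hπ : motif ⊆ _root_.actTri π T)
    (hρ : motif ⊆ _root_.actTri ρ T) : π = ρ := by
  by_contra hne
  obtain ⟨σ, hσ, τ, hτ, hcross⟩ := exists_not_compatible_image_actPt (ρ * π⁻¹)
    fun heq => hne (mul_inv_eq_one.1 heq).symm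
  have hσρ : σ.image (actPt (ρ * π⁻¹)) ∈ _root_.actTri ρ T := by
    have hact : _root_.actTri (ρ * π⁻¹) (_root_.actTri π T) = _root_.actTri ρ T := by
      rw [actTri_actTri, inv_mul_cancel_right]
    exact hact ▸ mem_image.2 ⟨σ, hπ hσ, rfl⟩
  exact hcross ((h.actTri ρ).compatible hσρ (hρ hτ))

/-- **Proposition (discussion around Figure 6).**  Up to the `S₃`-action on `4Δ₂`, there
are exactly 8 regular unimodular triangulations `𝒯` of `4Δ₂` with the property that no
smooth tropical quartic curve dual to `𝒯` satisfies genericity condition (i) (the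
*non-generic* triangulations); and these are exactly the unimodular refinements of a
single common partial subdivision of `4Δ₂`. -/
theorem nongeneric_triangulations_count_and_motif :
    (∃ reps : Finset (Finset (Finset (ℤ × ℤ))),
      (∀ T ∈ reps, NonGenericTriangulation T) ∧
      (∀ T, NonGenericTriangulation T → ∃! T', T' ∈ reps ∧ S3Equiv T T') ∧
      reps.card = 8) ∧
    (∃ S : Finset (Finset (ℤ × ℤ)), IsPartialSubdivision S ∧
      ∀ T, IsRegularUnimodularTriangulation T →
        ((∀ lam, Induces lam T → ¬ SatisfiesGenericityI lam) ↔
          ∃ π : Equiv.Perm (Fin 3), Refines (actTri π T) S)) := by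
  refine ⟨⟨representatives, fun T hT => ?_, fun T hT => ?_, card_representatives⟩,
    motif, isPartialSubdivision_motif, fun T hT => ?_⟩
  · exact nonGenericTriangulation_of_motif_subset
      (isRegularUnimodularTriangulation_of_mem_representatives hT)
      (motif_subset_of_mem_representatives hT)
  · obtain ⟨lam, hlam⟩ := isRegularUnimodularTriangulation_iff.1 hT.1
    obtain ⟨π, hπ⟩ := hT.exists_motif_subset_actTri
    refine ⟨actTri π T, ⟨(hlam.actTri π).mem_representatives hπ, π, rfl⟩, ?_⟩
    rintro _ ⟨hmem, ρ, rfl⟩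
    rw [hlam.eq_of_motif_subset_actTri hπ (motif_subset_of_mem_representatives hmem)]
  · obtain ⟨lam, hlam⟩ := isRegularUnimodularTriangulation_iff.1 hT
    have hrefines (π : Equiv.Perm (Fin 3)) : Refines (actTri π T) motif ↔ motif ⊆ actTri π T :=
      (hlam.actTri π).refines_iff_subset fun _ => isUnimodularTriangle_of_mem_motif
    have hnongeneric : NonGenericTriangulation T ↔
        ∀ lam, Induces lam T → ¬ SatisfiesGenericityI lam := and_iff_right hT
    rw [← hnongeneric, nonGenericTriangulation_iff_exists_motif_subset hT]
    exact exists_congr fun π => (hrefines π).symm
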